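/- Let Ω ⊂ ℝ^d have positive finite measure and p > 1. Then there exists an unconditional Schauder frame {(g_n, g_n*)} in L^p(Ω) such that each g_n satisfies |g_n(x)| = 1 almost everywhere on Ω. -/

import Mathlib

open MeasureTheory

/-- Burkholder's special function. -/
noncomputable def bU (p a x y : ℝ) : ℝ := (|y| - a * |x|) * (|x| + |y|) ^ (p - 1)

lemma tail_concave (p a u κ : ℝ) (hp : 1 < p) (hu : 0 ≤ u) (h : |κ * (p - 2)| ≤ (a - 1) * p * u)
    (ha : 1 ≤ a) :
    ConcaveOn ℝ (Set.Ici u) (fun s => (1 - a) * s ^ p + κ * s ^ (p - 1)) := by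
  refine concaveOn_of_hasDerivWithinAt2_nonpos (convex_Ici u)
    (f' := fun s => (1 - a) * (p * s ^ (p - 1)) + κ * ((p - 1) * s ^ (p - 1 - 1)))
    (f'' := fun s => (1 - a) * (p * ((p - 1) * s ^ (p - 1 - 1))) +
      κ * ((p - 1) * ((p - 1 - 1) * s ^ (p - 1 - 1 - 1)))) ?_ ?_ ?_ ?_
  · apply ContinuousOn.add
    · exact (continuous_const.mul (Real.continuous_rpow_const (by linarith))).continuousOn
    · exact (continuous_const.mul (Real.continuous_rpow_const (by linarith))).continuousOn
  · intro s hs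
    rw [interior_Ici] at hs ⊢
    have hs0 : s ≠ 0 := (lt_of_le_of_lt hu hs).ne'
    exact ((((Real.hasDerivAt_rpow_const (Or.inl hs0)).const_mul _).add
      ((Real.hasDerivAt_rpow_const (Or.inl hs0)).const_mul _))).hasDerivWithinAt
  · intro s hs
    rw [interior_Ici] at hs ⊢
    have hs0 : s ≠ 0 := (lt_of_le_of_lt hu hs).ne'
    exact (((((Real.hasDerivAt_rpow_const (Or.inl hs0)).const_mul _).const_mul _).add
      (((Real.hasDerivAt_rpow_const (Or.inl hs0)).const_mul _).const_mul _))).hasDerivWithinAt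
  · intro s hs
    rw [interior_Ici] at hs
    have hs0 : 0 < s := lt_of_le_of_lt hu hs
    have e : s ^ (p - 1 - 1) = s * s ^ (p - 1 - 1 - 1) := by
      rw [Real.rpow_sub_one hs0.ne' (p - 1 - 1)]
      field_simp
    have hX : 0 < s ^ (p - 1 - 1 - 1) := Real.rpow_pos_of_pos hs0 _
    have hs' : u < s := hs
    rw [e]
    have h1 : κ * (p - 2) ≤ (a - 1) * p * s := by
      have h2 := (le_abs_self _).trans h
      have : (a - 1) * p * u ≤ (a - 1) * p * s := by
        apply mul_le_mul_of_nonneg_left hs'.le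
        exact mul_nonneg (by linarith) (by linarith)
      linarith
    have h3 : (1 - a) * (p * ((p - 1) * (s * s ^ (p - 1 - 1 - 1)))) +
      κ * ((p - 1) * ((p - 1 - 1) * s ^ (p - 1 - 1 - 1))) =
      - (((p - 1) * s ^ (p - 1 - 1 - 1)) * ((a - 1) * p * s - κ * (p - 2))) := by ring
    rw [h3]
    have : 0 ≤ ((p - 1) * s ^ (p - 1 - 1 - 1)) * ((a - 1) * p * s - κ * (p - 2)) :=
      mul_nonneg (mul_nonneg (by linarith) hX.le) (by linarith)
    linarith

lemma concave_tangent {S : Set ℝ} {f : ℝ → ℝ} (hf : ConcaveOn ℝ S f) {x k : ℝ} (hx : x ∈ S)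
    (hk : HasDerivAt f k x) : ∀ y ∈ S, f y ≤ f x + k * (y - x) := by
  intro y hy
  rcases lt_trichotomy x y with h | h | h
  · have := hf.slope_le_of_hasDerivAt hx hy h hk
    rw [slope_def_field, div_le_iff₀ (by linarith)] at this
    linarith
  · subst h; simp
  · have := hf.le_slope_of_hasDerivAt hy hx h hk
    rw [slope_def_field, le_div_iff₀ (by linarith)] at this
    linarith

lemma tail_tangent (p a u κ : ℝ) (hp : 1 < p) (hu : 0 ≤ u)
    (h : |κ * (p - 2)| ≤ (a - 1) * p * u) (ha : 1 ≤ a) (s0 : ℝ) (hs0 : u < s0) :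
    ∃ k : ℝ, ∀ s, u ≤ s → (1 - a) * s ^ p + κ * s ^ (p - 1) ≤
      ((1 - a) * s0 ^ p + κ * s0 ^ (p - 1)) + k * (s - s0) := by
  have hs : s0 ≠ 0 := (lt_of_le_of_lt hu hs0).ne'
  refine ⟨_, fun s hs' => concave_tangent (tail_concave p a u κ hp hu h ha) (x := s0) hs0.le
    (((Real.hasDerivAt_rpow_const (Or.inl hs)).const_mul _).add
      ((Real.hasDerivAt_rpow_const (Or.inl hs)).const_mul _)) s hs'⟩

lemma tail_line (p a u σ : ℝ) (hp : 1 < p) (hu : 0 ≤ u)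
    (h : |(σ * (1 + a) * u) * (p - 2)| ≤ (a - 1) * p * u) (ha : 1 ≤ a) (s : ℝ) (hs : u ≤ s) :
    (1 - a) * s ^ p + (σ * (1 + a) * u) * s ^ (p - 1) ≤
      (1 - a) * u ^ p + (σ * (1 + a) * u) * u ^ (p - 1) + σ * (1 + a) * u ^ (p - 1) * (s - u) := by
  rcases hu.eq_or_lt with rfl | hu0
  · have h0 : (0 : ℝ) ^ (p - 1) = 0 := Real.zero_rpow (by linarith)
    have h1 : (0 : ℝ) ^ p = 0 := Real.zero_rpow (by linarith)
    rw [h0, h1]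
    have : 0 ≤ s ^ p := Real.rpow_nonneg hs _
    nlinarith
  · have := concave_tangent (tail_concave p a u _ hp hu h ha) (x := u) (Set.self_mem_Ici)
      (((Real.hasDerivAt_rpow_const (Or.inl hu0.ne')).const_mul _).add
      ((Real.hasDerivAt_rpow_const (Or.inl hu0.ne')).const_mul _)) s hs
    refine this.trans ?_
    have e : u ^ (p - 1) = u * u ^ (p - 1 - 1) := by
      rw [Real.rpow_sub_one hu0.ne' (p - 1)]
      field_simp
    have hX : 0 < u ^ (p - 1 - 1) := Real.rpow_pos_of_pos hu0 _
    rw [e]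
    have h2 := (le_abs_self _).trans h
    nlinarith [mul_nonneg (mul_nonneg hX.le (sub_nonneg.2 hs)) (sub_nonneg.2 h2)]

/-- supergradient along a zigzag line with `u ≥ 0`. -/
lemma line_super (p a u : ℝ) (hp : 1 < p) (ha : 1 ≤ a) (ha1 : p - 1 ≤ a) (ha2 : 1 ≤ a * (p - 1))
    (hu : 0 ≤ u) (t0 : ℝ) :
    ∃ k : ℝ, ∀ t, bU p a ((t + u) / 2) ((t - u) / 2) ≤
      bU p a ((t0 + u) / 2) ((t0 - u) / 2) + k * (t - t0) := by
  have hab : |(1 + a) * (p - 2)| ≤ (a - 1) * p := by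
    rw [abs_le]; constructor <;> nlinarith
  have hσ : ∀ σ : ℝ, |σ| = 1 → |(σ * (1 + a) * u) * (p - 2)| ≤ (a - 1) * p * u := by
    intro σ h
    have : (σ * (1 + a) * u) * (p - 2) = σ * ((1 + a) * (p - 2)) * u := by ring
    rw [this, abs_mul, abs_mul, h, one_mul, abs_of_nonneg hu]
    exact mul_le_mul_of_nonneg_right hab hu
  have hmul : ∀ s : ℝ, 0 ≤ s → s ^ p = s * s ^ (p - 1) := by
    intro s hs
    rw [← Real.rpow_one_add' hs (by linarith)]; congr 1; ring
  -- three pieces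
  have hR : ∀ t, u ≤ t → bU p a ((t + u) / 2) ((t - u) / 2) =
      ((1 - a) * t ^ p + ((-1) * (1 + a) * u) * t ^ (p - 1)) / 2 := by
    intro t ht
    rw [bU, abs_of_nonneg (by linarith : 0 ≤ (t + u) / 2),
      abs_of_nonneg (by linarith : 0 ≤ (t - u) / 2), hmul t (by linarith)]
    have : (t + u) / 2 + (t - u) / 2 = t := by ring
    rw [this]; ring
  have hL : ∀ t, t ≤ -u → bU p a ((t + u) / 2) ((t - u) / 2) =
      ((1 - a) * (-t) ^ p + (1 * (1 + a) * u) * (-t) ^ (p - 1)) / 2 := by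
    intro t ht
    rw [bU, abs_of_nonpos (by linarith : (t + u) / 2 ≤ 0),
      abs_of_nonpos (by linarith : (t - u) / 2 ≤ 0), hmul (-t) (by linarith)]
    have : -((t + u) / 2) + -((t - u) / 2) = -t := by ring
    rw [this]; ring
  have hM : ∀ t, -u ≤ t → t ≤ u → bU p a ((t + u) / 2) ((t - u) / 2) =
      ((1 - a) * u - (1 + a) * t) * u ^ (p - 1) / 2 := by
    intro t ht ht'
    rw [bU, abs_of_nonneg (by linarith : 0 ≤ (t + u) / 2),
      abs_of_nonpos (by linarith : (t - u) / 2 ≤ 0)]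
    have : ((t + u) / 2) + -((t - u) / 2) = u := by ring
    rw [this]; ring
  have hline : ∀ t, bU p a ((t + u) / 2) ((t - u) / 2) ≤
      ((1 - a) * u - (1 + a) * t) * u ^ (p - 1) / 2 := by
    intro t
    rcases le_total u t with h | h
    · rw [hR t h]
      have := tail_line p a u (-1) hp hu (hσ _ (by simp)) ha t h
      rw [hmul u hu] at this
      linarith
    · rcases le_total (-u) t with h' | h'
      · exact (hM t h' h).le
      · rw [hL t h']
        have := tail_line p a u 1 hp hu (hσ _ (by simp)) ha (-t) (by linarith)
        rw [hmul u hu] at this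
        linarith
  set L : ℝ → ℝ := fun t => bU p a ((t + u) / 2) ((t - u) / 2) with hLdef
  set K : ℝ := - ((1 + a) * u ^ (p - 1) / 2) with hK
  have hu2 : L u = ((1 - a) * u - (1 + a) * u) * u ^ (p - 1) / 2 := hM u (by linarith) le_rfl
  have hu3 : L (-u) = ((1 - a) * u - (1 + a) * (-u)) * u ^ (p - 1) / 2 :=
    hM (-u) le_rfl (by linarith)
  have gl1 : ∀ t, L t ≤ L u + K * (t - u) := by
    intro t; rw [hu2, hK]; have := hline t; simp only [hLdef]; linarith
  have gl2 : ∀ t, L t ≤ L (-u) + K * (t - (-u)) := by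
    intro t; rw [hu3, hK]; have := hline t; simp only [hLdef]; linarith
  change ∃ k : ℝ, ∀ t, L t ≤ L t0 + k * (t - t0)
  rcases lt_or_ge u t0 with h0 | h0
  · obtain ⟨k, hk⟩ := tail_tangent p a u ((-1) * (1 + a) * u) hp hu (hσ _ (by simp)) ha t0 h0
    have hk' : ∀ t, u ≤ t → L t ≤ L t0 + k / 2 * (t - t0) := by
      intro t ht
      have := hk t ht
      simp only [hLdef]
      rw [hR t ht, hR t0 h0.le]; linarith
    refine ⟨k / 2, fun t => ?_⟩
    rcases le_total u t with h | h
    · exact hk' t h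
    · have e1 := hk' u le_rfl
      have e2 := gl1 t0
      have e3 := gl1 t
      have e4 : k / 2 ≤ K := by
        by_contra hc; push Not at hc
        nlinarith
      nlinarith
  · rcases lt_or_ge t0 (-u) with h1 | h1
    · obtain ⟨k, hk⟩ := tail_tangent p a u (1 * (1 + a) * u) hp hu (hσ _ (by simp)) ha (-t0)
        (by linarith)
      have hk' : ∀ t, t ≤ -u → L t ≤ L t0 + (-k / 2) * (t - t0) := by
        intro t ht
        have := hk (-t) (by linarith)
        simp only [hLdef]
        rw [hL t ht, hL t0 h1.le]; linarith
      refine ⟨-k / 2, fun t => ?_⟩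
      rcases le_total t (-u) with h | h
      · exact hk' t h
      · have e1 := hk' (-u) le_rfl
        have e2 := gl2 t0
        have e3 := gl2 t
        have e4 : K ≤ -k / 2 := by
          by_contra hc; push Not at hc
          nlinarith
        nlinarith
    · refine ⟨K, fun t => ?_⟩
      have := hline t
      simp only [hLdef]
      rw [hM t0 h1 h0, hK]; linarith

lemma bU_neg_right (p a x y : ℝ) : bU p a x (-y) = bU p a x y := by simp [bU]
lemma bU_neg_left (p a x y : ℝ) : bU p a (-x) y = bU p a x y := by simp [bU]

lemma bU_super_one (p a : ℝ) (hp : 1 < p) (ha : 1 ≤ a) (ha1 : p - 1 ≤ a) (ha2 : 1 ≤ a * (p - 1))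
    (x y : ℝ) : ∃ k : ℝ, ∀ t, bU p a (x + t) (y + t) ≤ bU p a x y + k * t := by
  rcases le_total y x with h | h
  · obtain ⟨k, hk⟩ := line_super p a (x - y) hp ha ha1 ha2 (by linarith) (x + y)
    refine ⟨2 * k, fun t => ?_⟩
    have := hk (x + y + 2 * t)
    rw [show (x + y + 2 * t + (x - y)) / 2 = x + t by ring,
      show (x + y + 2 * t - (x - y)) / 2 = y + t by ring,
      show (x + y + (x - y)) / 2 = x by ring, show (x + y - (x - y)) / 2 = y by ring] at this
    linarith
  · obtain ⟨k, hk⟩ := line_super p a (y - x) hp ha ha1 ha2 (by linarith) (-(x + y))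
    refine ⟨-2 * k, fun t => ?_⟩
    have := hk (-(x + y + 2 * t))
    rw [show (-(x + y + 2 * t) + (y - x)) / 2 = -(x + t) by ring,
      show (-(x + y + 2 * t) - (y - x)) / 2 = -(y + t) by ring,
      show (-(x + y) + (y - x)) / 2 = -x by ring, show (-(x + y) - (y - x)) / 2 = -y by ring] at this
    simp only [bU_neg_left, bU_neg_right] at this
    linarith

lemma bU_super (p a : ℝ) (hp : 1 < p) (ha : 1 ≤ a) (ha1 : p - 1 ≤ a) (ha2 : 1 ≤ a * (p - 1))
    (x y ε : ℝ) (hε : ε = 1 ∨ ε = -1) :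
    ∃ k : ℝ, ∀ t, bU p a (x + t) (y + ε * t) ≤ bU p a x y + k * t := by
  rcases hε with rfl | rfl
  · simpa using bU_super_one p a hp ha ha1 ha2 x y
  · obtain ⟨k, hk⟩ := bU_super_one p a hp ha ha1 ha2 x (-y)
    refine ⟨k, fun t => ?_⟩
    have := hk t
    rw [bU_neg_right, show -y + t = -(y + -1 * t) by ring, bU_neg_right] at this
    exact this

lemma bU_lower (p a : ℝ) (hp : 1 < p) (ha : 1 ≤ a) (x y : ℝ) :
    |y| ^ p / 2 - (a * (1 + 2 * a) ^ (p - 1) + (2 * a) ^ p / 2) * |x| ^ p ≤ bU p a x y := by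
  have hmul : ∀ s : ℝ, 0 ≤ s → s ^ p = s * s ^ (p - 1) := by
    intro s hs
    rw [← Real.rpow_one_add' hs (by linarith)]; congr 1; ring
  have hx := abs_nonneg x
  have hy := abs_nonneg y
  have ha0 : 0 ≤ a := by linarith
  have c1 : 0 ≤ (1 + 2 * a) ^ (p - 1) := Real.rpow_nonneg (by linarith) _
  have c2 : 0 ≤ (2 * a) ^ p := Real.rpow_nonneg (by linarith) _
  have c3 : 0 ≤ |x| ^ p := Real.rpow_nonneg hx _
  rw [bU]
  rcases le_total (2 * a * |x|) |y| with h | h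
  · have h1 : |y| ^ (p - 1) ≤ (|x| + |y|) ^ (p - 1) :=
      Real.rpow_le_rpow hy (by linarith) (by linarith)
    have h2 : |y| / 2 * |y| ^ (p - 1) ≤ (|y| - a * |x|) * (|x| + |y|) ^ (p - 1) :=
      mul_le_mul (by linarith) h1 (Real.rpow_nonneg hy _) (by linarith)
    have h3 : 0 ≤ (a * (1 + 2 * a) ^ (p - 1) + (2 * a) ^ p / 2) * |x| ^ p := by positivity
    rw [hmul |y| hy]
    linarith
  · have h1 : (|x| + |y|) ^ (p - 1) ≤ ((1 + 2 * a) * |x|) ^ (p - 1) :=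
      Real.rpow_le_rpow (by linarith) (by linarith) (by linarith)
    rw [Real.mul_rpow (by linarith) hx] at h1
    have h0 : 0 ≤ (|x| + |y|) ^ (p - 1) := Real.rpow_nonneg (by linarith) _
    have h2 : |y| ^ p ≤ (2 * a) ^ p * |x| ^ p := by
      rw [← Real.mul_rpow (by linarith) hx]
      exact Real.rpow_le_rpow hy h (by linarith)
    have h3 : a * |x| * (|x| + |y|) ^ (p - 1) ≤ a * |x| * ((1 + 2 * a) ^ (p - 1) * |x| ^ (p - 1)) :=
      mul_le_mul_of_nonneg_left h1 (by positivity)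
    have h4 : 0 ≤ |y| * (|x| + |y|) ^ (p - 1) := by positivity
    have h5 : a * |x| * ((1 + 2 * a) ^ (p - 1) * |x| ^ (p - 1)) =
      a * (1 + 2 * a) ^ (p - 1) * |x| ^ p := by rw [hmul |x| hx]; ring
    nlinarith


/-- Sum over all words of length `n`. -/
def wsum : ℕ → (List Bool → ℝ) → ℝ
  | 0, φ => φ []
  | n + 1, φ => wsum n (fun w => φ (true :: w) + φ (false :: w))

lemma wsum_mono (n : ℕ) : ∀ (φ ψ : List Bool → ℝ), (∀ w, w.length = n → φ w ≤ ψ w) →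
    wsum n φ ≤ wsum n ψ := by
  induction n with
  | zero => intro φ ψ h; exact h [] rfl
  | succ n ih =>
    intro φ ψ h
    apply ih
    intro w hw
    exact add_le_add (h _ (by simp [hw])) (h _ (by simp [hw]))

lemma wsum_congr (n : ℕ) (φ ψ : List Bool → ℝ) (h : ∀ w, w.length = n → φ w = ψ w) :
    wsum n φ = wsum n ψ :=
  le_antisymm (wsum_mono n _ _ fun w hw => (h w hw).le) (wsum_mono n _ _ fun w hw => (h w hw).ge)

lemma wsum_add (n : ℕ) : ∀ (φ ψ : List Bool → ℝ),
    wsum n (fun w => φ w + ψ w) = wsum n φ + wsum n ψ := by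
  induction n with
  | zero => intro φ ψ; rfl
  | succ n ih =>
    intro φ ψ
    simp only [wsum]
    rw [← ih]
    congr 1; funext w; ring

lemma wsum_mul (n : ℕ) (C : ℝ) : ∀ (φ : List Bool → ℝ),
    wsum n (fun w => C * φ w) = C * wsum n φ := by
  induction n with
  | zero => intro φ; rfl
  | succ n ih =>
    intro φ
    simp only [wsum]
    rw [← ih]
    congr 1; funext w; ring

lemma wsum_tree (n : ℕ) (J : List Bool → ℝ) (hJ : ∀ w, J w = J (true :: w) + J (false :: w)) :
    wsum n J = J [] := by
  induction n with
  | zero => rfl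
  | succ n ih =>
    simp only [wsum]
    rw [← ih]
    exact wsum_congr _ _ _ fun w _ => (hJ w).symm

/-- The values of the generalized Haar function attached to `w`. -/
noncomputable def hv (a : List Bool → ℝ) (w : List Bool) (b : Bool) : ℝ :=
  if b then a (false :: w) / a w else -(a (true :: w) / a w)

lemma hv_abs_le (a : List Bool → ℝ) (ha0 : ∀ w, 0 ≤ a w)
    (ha : ∀ w, a w = a (true :: w) + a (false :: w)) (w : List Bool) (b : Bool) :
    |hv a w b| ≤ 1 := by
  have h1 := ha0 (true :: w)
  have h2 := ha0 (false :: w)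
  have h3 := ha w
  have h4 := ha0 w
  cases b
  · simp only [hv, Bool.false_eq_true, if_false, abs_neg]
    rw [abs_of_nonneg (by positivity)]
    exact div_le_one_of_le₀ (by linarith) h4
  · simp only [hv, if_true]
    rw [abs_of_nonneg (by positivity)]
    exact div_le_one_of_le₀ (by linarith) h4

lemma hv_mean (a : List Bool → ℝ) (w : List Bool) :
    a (true :: w) * hv a w true + a (false :: w) * hv a w false = 0 := by
  simp [hv]; ring

lemma burk_real (p : ℝ) (hp : 1 < p) : ∃ C : ℝ, 0 ≤ C ∧ ∀ (a : List Bool → ℝ) (_ : ∀ w, 0 ≤ a w)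
    (_ : ∀ w, a w = a (true :: w) + a (false :: w)) (c m γ ε : List Bool → ℝ)
    (_ : ∀ w, ε w = 1 ∨ ε w = -1)
    (_ : ∀ w b, m (b :: w) = m w + hv a w b * c w)
    (_ : γ [] = 0) (_ : ∀ w b, γ (b :: w) = γ w + ε w * (hv a w b * c w)) (n : ℕ),
    wsum n (fun w => a w * |γ w| ^ p) ≤ C * wsum n (fun w => a w * |m w| ^ p) := by
  obtain ⟨A, hA, hA1, hA2⟩ : ∃ A : ℝ, 1 ≤ A ∧ p - 1 ≤ A ∧ 1 ≤ A * (p - 1) := by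
    refine ⟨max 1 (max (p - 1) (p - 1)⁻¹), le_max_left _ _,
      (le_max_left _ _).trans (le_max_right _ _), ?_⟩
    have h1 : (p - 1)⁻¹ ≤ max 1 (max (p - 1) (p - 1)⁻¹) :=
      (le_max_right _ _).trans (le_max_right _ _)
    have h2 : 0 < p - 1 := by linarith
    calc (1 : ℝ) = (p - 1)⁻¹ * (p - 1) := by field_simp
      _ ≤ _ := mul_le_mul_of_nonneg_right h1 h2.le
  set D := A * (1 + 2 * A) ^ (p - 1) + (2 * A) ^ p / 2 with hD
  have hD0 : 0 ≤ D := by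
    have c1 : 0 ≤ (1 + 2 * A) ^ (p - 1) := Real.rpow_nonneg (by linarith) _
    have c2 : 0 ≤ (2 * A) ^ p := Real.rpow_nonneg (by linarith) _
    positivity
  refine ⟨2 * D, by linarith, ?_⟩
  intro a ha0 ha c m γ ε hε hm hγ0 hγ n
  have key : ∀ n, wsum n (fun w => a w * bU p A (m w) (γ w)) ≤ 0 := by
    intro n
    induction n with
    | zero =>
      simp only [wsum, hγ0]
      have : bU p A (m []) 0 ≤ 0 := by
        simp only [bU, abs_zero]
        have := Real.rpow_nonneg (show 0 ≤ |m []| + 0 by positivity) (p - 1)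
        have h2 : 0 ≤ A * |m []| := by positivity
        nlinarith
      exact mul_nonpos_of_nonneg_of_nonpos (ha0 _) this
    | succ n ih =>
      refine le_trans ?_ ih
      simp only [wsum]
      apply wsum_mono
      intro w _
      obtain ⟨k, hk⟩ := bU_super p A hp hA hA1 hA2 (m w) (γ w) (ε w) (hε w)
      have e1 := mul_le_mul_of_nonneg_left (hk (hv a w true * c w)) (ha0 (true :: w))
      have e2 := mul_le_mul_of_nonneg_left (hk (hv a w false * c w)) (ha0 (false :: w))
      rw [hm, hm, hγ, hγ]
      have e3 := hv_mean a w
      have e4 : k * c w * (a (true :: w) * hv a w true + a (false :: w) * hv a w false) = 0 := by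
        rw [e3, mul_zero]
      rw [ha w]
      linarith
  have h1 : wsum n (fun w => (1 / 2) * (a w * |γ w| ^ p)) ≤
      wsum n (fun w => a w * bU p A (m w) (γ w) + D * (a w * |m w| ^ p)) := by
    apply wsum_mono
    intro w _
    have := mul_le_mul_of_nonneg_left (bU_lower p A hp hA (m w) (γ w)) (ha0 w)
    rw [← hD] at this
    linarith
  rw [wsum_add, wsum_mul, wsum_mul] at h1
  have := key n
  linarith

lemma burk_complex (p : ℝ) (hp : 1 < p) : ∃ C : ℝ, 0 ≤ C ∧
    ∀ (a : List Bool → ℝ) (_ : ∀ w, 0 ≤ a w)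
    (_ : ∀ w, a w = a (true :: w) + a (false :: w)) (c m γ : List Bool → ℂ) (ε : List Bool → ℝ)
    (_ : ∀ w, ε w = 1 ∨ ε w = -1)
    (_ : ∀ w b, m (b :: w) = m w + ((hv a w b : ℝ) : ℂ) * c w)
    (_ : γ [] = 0) (_ : ∀ w b, γ (b :: w) = γ w + (ε w : ℂ) * (((hv a w b : ℝ) : ℂ) * c w)) (n : ℕ),
    wsum n (fun w => a w * ‖γ w‖ ^ p) ≤ C * wsum n (fun w => a w * ‖m w‖ ^ p) := by
  obtain ⟨C, hC, h⟩ := burk_real p hp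
  refine ⟨2 ^ p * (2 * C), by positivity, ?_⟩
  intro a ha0 ha c m γ ε hε hm hγ0 hγ n
  have hre := h a ha0 ha (fun w => (c w).re) (fun w => (m w).re) (fun w => (γ w).re) ε hε
    (by intro w b; simp [hm]) (by simp [hγ0]) (by intro w b; simp [hγ]) n
  have him := h a ha0 ha (fun w => (c w).im) (fun w => (m w).im) (fun w => (γ w).im) ε hε
    (by intro w b; simp [hm]) (by simp [hγ0]) (by intro w b; simp [hγ]) n
  have h1 : wsum n (fun w => a w * ‖γ w‖ ^ p) ≤ wsum n (fun w => 2 ^ p *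
      (a w * |(γ w).re| ^ p + a w * |(γ w).im| ^ p)) := by
    apply wsum_mono
    intro w _
    have : ‖γ w‖ ^ p ≤ 2 ^ p * (|(γ w).re| ^ p + |(γ w).im| ^ p) := by
      have h2 := Complex.norm_le_abs_re_add_abs_im (γ w)
      have r0 := Real.rpow_nonneg (abs_nonneg (γ w).re) p
      have i0 := Real.rpow_nonneg (abs_nonneg (γ w).im) p
      rcases le_total |(γ w).re| |(γ w).im| with hh | hh
      · calc ‖γ w‖ ^ p ≤ (2 * |(γ w).im|) ^ p :=
              Real.rpow_le_rpow (norm_nonneg _) (by linarith) (by linarith)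
          _ = 2 ^ p * |(γ w).im| ^ p := Real.mul_rpow (by norm_num) (abs_nonneg _)
          _ ≤ _ := mul_le_mul_of_nonneg_left (by linarith) (by positivity)
      · calc ‖γ w‖ ^ p ≤ (2 * |(γ w).re|) ^ p :=
              Real.rpow_le_rpow (norm_nonneg _) (by linarith) (by linarith)
          _ = 2 ^ p * |(γ w).re| ^ p := Real.mul_rpow (by norm_num) (abs_nonneg _)
          _ ≤ _ := mul_le_mul_of_nonneg_left (by linarith) (by positivity)
    have := mul_le_mul_of_nonneg_left this (ha0 w)
    linarith
  have h2 : wsum n (fun w => a w * |(m w).re| ^ p) ≤ wsum n (fun w => a w * ‖m w‖ ^ p) := by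
    apply wsum_mono
    intro w _
    exact mul_le_mul_of_nonneg_left (Real.rpow_le_rpow (abs_nonneg _) (Complex.abs_re_le_norm _)
      (by linarith)) (ha0 w)
  have h3 : wsum n (fun w => a w * |(m w).im| ^ p) ≤ wsum n (fun w => a w * ‖m w‖ ^ p) := by
    apply wsum_mono
    intro w _
    exact mul_le_mul_of_nonneg_left (Real.rpow_le_rpow (abs_nonneg _) (Complex.abs_im_le_norm _)
      (by linarith)) (ha0 w)
  rw [wsum_mul, wsum_add] at h1
  refine h1.trans ?_
  rw [mul_assoc]
  apply mul_le_mul_of_nonneg_left _ (by positivity)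
  have := mul_le_mul_of_nonneg_left h2 hC
  have := mul_le_mul_of_nonneg_left h3 hC
  linarith


/-- The address of a point with respect to the sets `B 0, …, B (n-1)`. -/
noncomputable def path {X : Type*} (B : ℕ → Set X) : ℕ → X → List Bool
  | 0, _ => []
  | n + 1, x => (open Classical in decide (x ∈ B n)) :: path B n x

lemma length_path {X : Type*} (B : ℕ → Set X) (n : ℕ) (x : X) : (path B n x).length = n := by
  induction n with
  | zero => rfl
  | succ n ih => simp [path, ih]

lemma path_drop {X : Type*} (B : ℕ → Set X) (n k : ℕ) (x : X) :
    (path B (n + k) x).drop k = path B n x := by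
  induction k with
  | zero => rfl
  | succ k ih => simpa [path, ← add_assoc] using ih

/-- The atom with address `w`. -/
def atom {X : Type*} (B : ℕ → Set X) (w : List Bool) : Set X := {x | path B w.length x = w}

lemma atom_nil {X : Type*} (B : ℕ → Set X) : atom B [] = Set.univ := by
  ext x; simp [atom, path]

lemma atom_true {X : Type*} (B : ℕ → Set X) (w : List Bool) :
    atom B (true :: w) = atom B w ∩ B w.length := by
  ext x; simp [atom, path, and_comm]

lemma atom_false {X : Type*} (B : ℕ → Set X) (w : List Bool) :
    atom B (false :: w) = atom B w \ B w.length := by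
  ext x; simp [atom, path, and_comm]

lemma measurableSet_atom {X : Type*} [MeasurableSpace X] (B : ℕ → Set X)
    (hB : ∀ n, MeasurableSet (B n)) (w : List Bool) : MeasurableSet (atom B w) := by
  induction w with
  | nil => rw [atom_nil]; exact MeasurableSet.univ
  | cons b w ih =>
    cases b
    · rw [atom_false]; exact ih.diff (hB _)
    · rw [atom_true]; exact ih.inter (hB _)

lemma measurable_path {X : Type*} [MeasurableSpace X] (B : ℕ → Set X)
    (hB : ∀ n, MeasurableSet (B n)) {Y : Type*} [MeasurableSpace Y] (n : ℕ) :
    ∀ φ : List Bool → Y, Measurable (fun x => φ (path B n x)) := by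
  induction n with
  | zero => intro φ; simp only [path]; exact measurable_const
  | succ n ih =>
    intro φ
    have : (fun x => φ (path B (n + 1) x)) = (open Classical in
      fun x => if x ∈ B n then φ (true :: path B n x) else φ (false :: path B n x)) := by
      funext x
      by_cases h : x ∈ B n <;> simp [path, h]
    rw [this]
    exact Measurable.ite (hB n) (ih (fun w => φ (true :: w))) (ih (fun w => φ (false :: w)))

lemma bounded_path {X : Type*} (B : ℕ → Set X) {E : Type*} [NormedAddCommGroup E] (n : ℕ) :
    ∀ φ : List Bool → E, ∃ M : ℝ, ∀ x, ‖φ (path B n x)‖ ≤ M := by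
  induction n with
  | zero => intro φ; exact ⟨‖φ []‖, fun x => le_rfl⟩
  | succ n ih =>
    intro φ
    obtain ⟨M1, h1⟩ := ih (fun w => φ (true :: w))
    obtain ⟨M2, h2⟩ := ih (fun w => φ (false :: w))
    refine ⟨max M1 M2, fun x => ?_⟩
    by_cases h : x ∈ B n
    · simpa [path, h] using Or.inl (h1 x)
    · simpa [path, h] using Or.inr (h2 x)

lemma integrable_path {X : Type*} [MeasurableSpace X] (μ : Measure X) [IsFiniteMeasure μ]
    (B : ℕ → Set X) (hB : ∀ n, MeasurableSet (B n)) (n : ℕ) (φ : List Bool → ℝ) :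
    Integrable (fun x => φ (path B n x)) μ := by
  obtain ⟨M, hM⟩ := bounded_path B n φ
  exact Integrable.of_bound (measurable_path B hB n φ).aestronglyMeasurable M
    (Filter.Eventually.of_forall hM)

lemma setIntegral_path {X : Type*} [MeasurableSpace X] (μ : Measure X) [IsFiniteMeasure μ]
    (B : ℕ → Set X) (hB : ∀ n, MeasurableSet (B n)) (n : ℕ) :
    ∀ (φ : List Bool → ℝ) (S : Set X), MeasurableSet S →
    ∫ x in S, φ (path B n x) ∂μ = wsum n (fun w => μ.real (atom B w ∩ S) * φ w) := by
  induction n with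
  | zero => intro φ S hS; simp [path, wsum, atom_nil]
  | succ n ih =>
    intro φ S hS
    rw [← integral_inter_add_sdiff (hB n) ((integrable_path μ B hB (n + 1) φ).integrableOn)]
    have e1 : ∫ x in S ∩ B n, φ (path B (n + 1) x) ∂μ =
        ∫ x in S ∩ B n, (fun w => φ (true :: w)) (path B n x) ∂μ := by
      apply setIntegral_congr_fun (hS.inter (hB n))
      intro x hx
      simp [path, hx.2]
    have e2 : ∫ x in S \ B n, φ (path B (n + 1) x) ∂μ =
        ∫ x in S \ B n, (fun w => φ (false :: w)) (path B n x) ∂μ := by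
      apply setIntegral_congr_fun (hS.diff (hB n))
      intro x hx
      simp [path, hx.2]
    rw [e1, e2, ih (fun w => φ (true :: w)) _ (hS.inter (hB n)),
      ih (fun w => φ (false :: w)) _ (hS.diff (hB n)), ← wsum_add]
    simp only [wsum]
    apply wsum_congr
    intro w hw
    rw [atom_true, atom_false, hw]
    have s1 : atom B w ∩ (S ∩ B n) = atom B w ∩ B n ∩ S := by ext x; simp; tauto
    have s2 : atom B w ∩ (S \ B n) = (atom B w \ B n) ∩ S := by ext x; simp; tauto
    rw [s1, s2]

lemma integral_path {X : Type*} [MeasurableSpace X] (μ : Measure X) [IsFiniteMeasure μ]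
    (B : ℕ → Set X) (hB : ∀ n, MeasurableSet (B n)) (n : ℕ) (φ : List Bool → ℝ) :
    ∫ x, φ (path B n x) ∂μ = wsum n (fun w => μ.real (atom B w) * φ w) := by
  have := setIntegral_path μ B hB n φ Set.univ MeasurableSet.univ
  simpa using this

lemma setIntegral_tree {X : Type*} [MeasurableSpace X] (μ : Measure X)
    (B : ℕ → Set X) (hB : ∀ n, MeasurableSet (B n)) {E : Type*} [NormedAddCommGroup E]
    [NormedSpace ℝ E] (f : X → E) (hf : Integrable f μ) (w : List Bool) :
    ∫ x in atom B w, f x ∂μ = ∫ x in atom B (true :: w), f x ∂μ +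
      ∫ x in atom B (false :: w), f x ∂μ := by
  rw [atom_true, atom_false, integral_inter_add_sdiff (hB _) hf.integrableOn]

lemma measure_tree {X : Type*} [MeasurableSpace X] (μ : Measure X) [IsFiniteMeasure μ]
    (B : ℕ → Set X) (hB : ∀ n, MeasurableSet (B n)) (w : List Bool) :
    μ.real (atom B w) = μ.real (atom B (true :: w)) + μ.real (atom B (false :: w)) := by
  rw [atom_true, atom_false, measureReal_inter_add_sdiff (hB _)]

lemma ae_path_ne {X : Type*} [MeasurableSpace X] (μ : Measure X) [IsFiniteMeasure μ]
    (B : ℕ → Set X) (n : ℕ) : ∀ᵐ x ∂μ, μ.real (atom B (path B n x)) ≠ 0 := by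
  have : ∀ w : List Bool, ∀ᵐ x ∂μ, μ.real (atom B w) = 0 → x ∉ atom B w := by
    intro w
    by_cases h : μ.real (atom B w) = 0
    · rw [measureReal_eq_zero_iff] at h
      filter_upwards [measure_eq_zero_iff_ae_notMem.1 h] with x hx _ using hx
    · exact Filter.Eventually.of_forall fun x hx => absurd hx h
  filter_upwards [ae_all_iff.2 this] with x hx h0
  exact hx _ h0 (by simp [atom, length_path])

/-- The process on words with increments `ε w * hv w b * c w`. -/
noncomputable def gam (a : List Bool → ℝ) (c : List Bool → ℂ) (ε : List Bool → ℝ) (z : ℂ) :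
    List Bool → ℂ
  | [] => z
  | b :: w => gam a c ε z w + (ε w : ℂ) * (((hv a w b : ℝ) : ℂ) * c w)

lemma gam_mean (a : List Bool → ℝ) (ha0 : ∀ w, 0 ≤ a w)
    (ha : ∀ w, a w = a (true :: w) + a (false :: w)) (I c : List Bool → ℂ)
    (hI : ∀ w, I w = I (true :: w) + I (false :: w)) (hI0 : ∀ w, a w = 0 → I w = 0)
    (hc : ∀ w, c w = (((a (true :: w) * a (false :: w) : ℝ) : ℂ))⁻¹ *
      ((a (false :: w) : ℂ) * I (true :: w) - (a (true :: w) : ℂ) * I (false :: w))) (w : List Bool) :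
    (a w : ℂ) * gam a c (fun _ => 1) (I [] / (a [] : ℂ)) w = I w := by
  induction w with
  | nil =>
    simp only [gam]
    by_cases h : a [] = 0
    · simp [h, hI0 _ h]
    · have : (a [] : ℂ) ≠ 0 := by exact_mod_cast h
      field_simp
  | cons b w ih =>
    simp only [gam]
    by_cases hb : a (b :: w) = 0
    · simp [hb, hI0 _ hb]
    have hw : a w ≠ 0 := by
      have h1 := ha0 (true :: w)
      have h2 := ha0 (false :: w)
      have h3 := ha w
      cases b
      · have : 0 < a (false :: w) := lt_of_le_of_ne h2 (Ne.symm hb)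
        linarith
      · have : 0 < a (true :: w) := lt_of_le_of_ne h1 (Ne.symm hb)
        linarith
    have hwC : (a w : ℂ) ≠ 0 := by exact_mod_cast hw
    have hm : gam a c (fun _ => 1) (I [] / (a [] : ℂ)) w = I w / (a w : ℂ) := by
      rw [← ih]; field_simp
    have haC : (a w : ℂ) = (a (true :: w) : ℂ) + (a (false :: w) : ℂ) := by
      rw [← Complex.ofReal_add, ← ha w]
    have hIw := hI w
    rw [hm]
    cases b
    · have hbC : (a (false :: w) : ℂ) ≠ 0 := by exact_mod_cast hb
      by_cases ht : a (true :: w) = 0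
      · have e1 := hI0 _ ht
        rw [ht] at haC
        simp only [hv, ht]
        simp at haC ⊢
        rw [haC] at hwC ⊢
        rw [hIw, e1]
        field_simp
        simp
      · have htC : (a (true :: w) : ℂ) ≠ 0 := by exact_mod_cast ht
        simp only [hv, hc]
        push_cast
        rw [haC] at hwC ⊢
        rw [hIw]
        field_simp
        ring
    · have hbC : (a (true :: w) : ℂ) ≠ 0 := by exact_mod_cast hb
      by_cases ht : a (false :: w) = 0
      · have e1 := hI0 _ ht
        rw [ht] at haC
        simp only [hv, ht]
        simp at haC ⊢
        rw [haC] at hwC ⊢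
        rw [hIw, e1]
        field_simp
        simp
      · have htC : (a (false :: w) : ℂ) ≠ 0 := by exact_mod_cast ht
        simp only [hv, hc]
        push_cast
        rw [haC] at hwC ⊢
        rw [hIw]
        field_simp
        ring

/-- The generalized Haar function attached to `w`. -/
noncomputable def haar {X : Type*} (B : ℕ → Set X) (a : List Bool → ℝ) (w : List Bool) (x : X) : ℝ :=
  open Classical in
  if path B w.length x = w then hv a w (decide (x ∈ B w.length)) else 0

lemma haar_meas {X : Type*} [MeasurableSpace X] (B : ℕ → Set X) (hB : ∀ n, MeasurableSet (B n))
    (a : List Bool → ℝ) (w : List Bool) : Measurable (haar B a w) := by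
  classical
  unfold haar
  apply Measurable.ite (measurableSet_atom B hB w) _ measurable_const
  have : (fun x => hv a w (decide (x ∈ B w.length))) =
    fun x => if x ∈ B w.length then hv a w true else hv a w false := by
    funext x
    by_cases h : x ∈ B w.length <;> simp [h]
  rw [this]
  exact Measurable.ite (hB _) measurable_const measurable_const

/-- Words of length less than `n`. -/
noncomputable def Wn (n : ℕ) : Finset (List Bool) := (List.finite_length_lt Bool n).toFinset

lemma mem_Wn (n : ℕ) (w : List Bool) : w ∈ Wn n ↔ w.length < n := by simp [Wn]

lemma sum_haar {X : Type*} (B : ℕ → Set X) (a : List Bool → ℝ) (c : List Bool → ℂ)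
    (ε : List Bool → ℝ) (z : ℂ) (n : ℕ) (x : X) :
    z + ∑ w ∈ Wn n, (ε w : ℂ) * (c w * (haar B a w x : ℂ)) = gam a c ε z (path B n x) := by
  classical
  induction n with
  | zero =>
    have : Wn 0 = ∅ := by ext w; simp [mem_Wn]
    simp [this, path, gam]
  | succ n ih =>
    have e : Wn (n + 1) = Wn n ∪ (List.finite_length_eq Bool n).toFinset := by
      ext w; simp [mem_Wn]; omega
    have hd : Disjoint (Wn n) (List.finite_length_eq Bool n).toFinset := by
      rw [Finset.disjoint_left]
      intro w hw hw'
      simp [mem_Wn] at hw hw'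
      omega
    rw [e, Finset.sum_union hd, ← add_assoc, ih]
    simp only [path, gam]
    congr 1
    rw [Finset.sum_eq_single (path B n x)]
    · simp only [haar, length_path, if_true]
      ring
    · intro w hw hne
      simp at hw
      have : haar B a w x = 0 := by
        simp only [haar, hw]
        rw [if_neg (Ne.symm hne)]
      simp [this]
    · intro h
      simp [length_path] at h


lemma lp_integrable {X : Type*} [MeasurableSpace X] {μ : Measure X} [IsFiniteMeasure μ]
    {p : ℝ} [h1 : Fact (1 ≤ ENNReal.ofReal p)] (f : Lp ℂ (ENNReal.ofReal p) μ) :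
    Integrable (fun x => f x) μ :=
  (Lp.memLp f).integrable h1.out

lemma lp_norm_rpow {X : Type*} [MeasurableSpace X] {μ : Measure X}
    {p : ℝ} (hp : 1 < p) (f : Lp ℂ (ENNReal.ofReal p) μ) :
    ‖f‖ ^ p = ∫ x, ‖f x‖ ^ p ∂μ := by
  have hp0 : 0 < p := by linarith
  have hne : ENNReal.ofReal p ≠ 0 := by simpa using hp0
  rw [Lp.norm_def, (Lp.memLp f).eLpNorm_eq_integral_rpow_norm hne ENNReal.ofReal_ne_top]
  rw [ENNReal.toReal_ofReal hp0.le]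
  have hnn : 0 ≤ ∫ x, ‖f x‖ ^ p ∂μ := integral_nonneg fun x => by positivity
  rw [ENNReal.toReal_ofReal (by positivity), ← Real.rpow_mul hnn, inv_mul_cancel₀ hp0.ne',
    Real.rpow_one]

lemma lp_integrable_rpow {X : Type*} [MeasurableSpace X] {μ : Measure X}
    {p : ℝ} (hp : 1 < p) (f : Lp ℂ (ENNReal.ofReal p) μ) :
    Integrable (fun x => ‖f x‖ ^ p) μ := by
  have hp0 : 0 < p := by linarith
  have hne : ENNReal.ofReal p ≠ 0 := by simpa using hp0
  have := (Lp.memLp f).integrable_norm_rpow hne ENNReal.ofReal_ne_top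
  rwa [ENNReal.toReal_ofReal hp0.le] at this

lemma lp_l1_bound {X : Type*} [MeasurableSpace X] (μ : Measure X) [IsFiniteMeasure μ]
    (p : ℝ) [h1 : Fact (1 ≤ ENNReal.ofReal p)] :
    ∃ K : ℝ, ∀ f : Lp ℂ (ENNReal.ofReal p) μ, ∫ x, ‖f x‖ ∂μ ≤ K * ‖f‖ := by
  refine ⟨(μ Set.univ ^ (1 / (1 : ENNReal).toReal - 1 / (ENNReal.ofReal p).toReal)).toReal,
    fun f => ?_⟩
  have h := eLpNorm_le_eLpNorm_mul_rpow_measure_univ h1.out (Lp.memLp f).1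
  rw [integral_norm_eq_lintegral_enorm (Lp.memLp f).1, ← eLpNorm_one_eq_lintegral_enorm,
    Lp.norm_def, mul_comm, ← ENNReal.toReal_mul]
  apply ENNReal.toReal_mono _ h
  apply ENNReal.mul_ne_top (Lp.memLp f).2.ne
  apply ENNReal.rpow_ne_top_of_nonneg _ (measure_ne_top μ _)
  have : (1 : ENNReal).toReal ≤ (ENNReal.ofReal p).toReal :=
    ENNReal.toReal_mono ENNReal.ofReal_ne_top h1.out
  simp only [ENNReal.toReal_one] at this ⊢
  rw [sub_nonneg]
  exact one_div_le_one_div_of_le one_pos this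

/-- Integration over a set as a functional. -/
noncomputable def intCLM {X : Type*} [MeasurableSpace X] (μ : Measure X) [IsFiniteMeasure μ]
    (p : ℝ) [h1 : Fact (1 ≤ ENNReal.ofReal p)] (S : Set X) :
    Lp ℂ (ENNReal.ofReal p) μ →L[ℂ] ℂ :=
  LinearMap.mkContinuousOfExistsBound
    { toFun := fun f => ∫ x in S, f x ∂μ
      map_add' := by
        intro f g
        rw [← integral_add (lp_integrable f).integrableOn (lp_integrable g).integrableOn]
        apply integral_congr_ae
        filter_upwards [ae_restrict_of_ae (Lp.coeFn_add f g)] with x hx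
        simpa using hx
      map_smul' := by
        intro c f
        simp only [RingHom.id_apply]
        rw [← integral_smul]
        apply integral_congr_ae
        filter_upwards [ae_restrict_of_ae (Lp.coeFn_smul c f)] with x hx
        simpa using hx }
    (by
      obtain ⟨K, hK⟩ := lp_l1_bound μ p
      refine ⟨K, fun f => le_trans ?_ (hK f)⟩
      refine (norm_integral_le_integral_norm _).trans ?_
      exact setIntegral_le_integral (lp_integrable f).norm
        (Filter.Eventually.of_forall fun x => norm_nonneg _))

lemma intCLM_apply {X : Type*} [MeasurableSpace X] (μ : Measure X) [IsFiniteMeasure μ]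
    (p : ℝ) [h1 : Fact (1 ≤ ENNReal.ofReal p)] (S : Set X) (f : Lp ℂ (ENNReal.ofReal p) μ) :
    intCLM μ p S f = ∫ x in S, f x ∂μ := rfl

lemma setIntegral_jensen {X : Type*} [MeasurableSpace X] (μ : Measure X) [IsFiniteMeasure μ]
    {p : ℝ} (hp : 1 < p) [h1 : Fact (1 ≤ ENNReal.ofReal p)]
    (f : Lp ℂ (ENNReal.ofReal p) μ) (S : Set X) (m : ℂ)
    (hm : (μ.real S : ℂ) * m = ∫ x in S, f x ∂μ) :
    μ.real S * ‖m‖ ^ p ≤ ∫ x in S, ‖f x‖ ^ p ∂μ := by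
  by_cases h0 : μ.real S = 0
  · rw [h0, zero_mul]
    exact integral_nonneg fun x => by positivity
  have hS0 : μ S ≠ 0 := by
    intro h; apply h0; simp [measureReal_def, h]
  have hc : ConvexOn ℝ Set.univ (fun z : ℂ => ‖z‖ ^ p) := by
    refine ⟨convex_univ, fun x _ y _ s t hs ht hst => ?_⟩
    have h := (convexOn_rpow hp.le).2 (norm_nonneg x) (norm_nonneg y) hs ht hst
    refine le_trans ?_ h
    simp only [smul_eq_mul]
    apply Real.rpow_le_rpow (norm_nonneg _) _ (by linarith)
    refine (norm_add_le _ _).trans ?_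
    rw [norm_smul, norm_smul, Real.norm_of_nonneg hs, Real.norm_of_nonneg ht]
  have hcont : Continuous (fun z : ℂ => ‖z‖ ^ p) :=
    continuous_norm.rpow_const fun _ => Or.inr (by linarith)
  have hJ := hc.map_set_average_le (μ := μ) (t := S) (f := fun x => f x) hcont.continuousOn
    isClosed_univ hS0 (measure_ne_top μ S) (by simp) (lp_integrable f).integrableOn
    (lp_integrable_rpow hp f).integrableOn
  rw [setAverage_eq, setAverage_eq, ← hm] at hJ
  have hC : ((μ.real S : ℝ) : ℂ) ≠ 0 := by exact_mod_cast h0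
  have e : (μ.real S)⁻¹ • ((μ.real S : ℂ) * m) = m := by
    rw [Complex.real_smul]; push_cast; field_simp
  rw [e, smul_eq_mul] at hJ
  have hpos : 0 < μ.real S := lt_of_le_of_ne measureReal_nonneg (Ne.symm h0)
  calc μ.real S * ‖m‖ ^ p ≤ μ.real S * ((μ.real S)⁻¹ * ∫ x in S, ‖f x‖ ^ p ∂μ) := by gcongr
    _ = _ := by field_simp

lemma lp_sum_ae {X ι : Type*} [MeasurableSpace X] {μ : Measure X} {q : ENNReal}
    (s : Finset ι) (g : ι → Lp ℂ q μ) (h : ι → X → ℂ) (hg : ∀ i, g i =ᵐ[μ] h i) (b : ι → ℂ) :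
    (∑ i ∈ s, b i • g i : Lp ℂ q μ) =ᵐ[μ] fun x => ∑ i ∈ s, b i * h i x := by
  classical
  induction s using Finset.induction_on with
  | empty =>
    simp only [Finset.sum_empty]
    exact Lp.coeFn_zero _ _ _
  | insert j s hj ih =>
    rw [Finset.sum_insert hj]
    filter_upwards [Lp.coeFn_add (b j • g j) (∑ i ∈ s, b i • g i), ih,
      Lp.coeFn_smul (b j) (g j), hg j] with x h1 h2 h3 h4
    rw [h1, Finset.sum_insert hj, Pi.add_apply, h2, h3, Pi.smul_apply, h4, smul_eq_mul]

lemma sign_conv {ι E : Type*} [NormedAddCommGroup E] [NormedSpace ℂ E] (s : Finset ι) (v : ι → E)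
    (K : ℝ) : ∀ u : E, (∀ ε : ι → ℝ, (∀ i, ε i = 1 ∨ ε i = -1) → ‖u + ∑ i ∈ s, (ε i : ℂ) • v i‖ ≤ K) →
    ∀ θ : ι → ℝ, (∀ i, |θ i| ≤ 1) → ‖u + ∑ i ∈ s, (θ i : ℂ) • v i‖ ≤ K := by
  classical
  induction s using Finset.induction_on with
  | empty => intro u h θ _; simpa using h (fun _ => 1) (fun _ => Or.inl rfl)
  | insert j s hj ih =>
    intro u h θ hθ
    rw [Finset.sum_insert hj, ← add_assoc]
    apply ih _ _ θ hθ
    intro ε hε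
    have key : ∀ t : ℝ, (t = 1 ∨ t = -1) → ‖u + (t : ℂ) • v j + ∑ i ∈ s, (ε i : ℂ) • v i‖ ≤ K := by
      intro t ht
      have := h (Function.update ε j t) (by
        intro i
        by_cases hi : i = j
        · subst hi; simpa using ht
        · simpa [Function.update_of_ne hi] using hε i)
      rw [Finset.sum_insert hj, ← add_assoc] at this
      rw [Finset.sum_congr rfl (g := fun i => (ε i : ℂ) • v i)] at this
      · simpa using this
      · intro i hi
        rw [Function.update_of_ne]
        rintro rfl; exact hj hi
    have k1 := key 1 (Or.inl rfl)
    have k2 := key (-1) (Or.inr rfl)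
    set S := ∑ i ∈ s, (ε i : ℂ) • v i
    have h1 := abs_le.1 (hθ j)
    have e : u + (θ j : ℂ) • v j + S = (((1 + θ j) / 2 : ℝ) : ℂ) • (u + ((1 : ℝ) : ℂ) • v j + S) +
        (((1 - θ j) / 2 : ℝ) : ℂ) • (u + ((-1 : ℝ) : ℂ) • v j + S) := by
      push_cast
      module
    rw [e]
    refine (norm_add_le _ _).trans ?_
    rw [norm_smul, norm_smul, Complex.norm_real, Complex.norm_real,
      Real.norm_of_nonneg (by linarith), Real.norm_of_nonneg (by linarith)]
    nlinarith

/-- measure of the atoms -/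
noncomputable def am {X : Type*} [MeasurableSpace X] (μ : Measure X) (B : ℕ → Set X)
    (w : List Bool) : ℝ := μ.real (atom B w)

/-- The Haar coefficient functionals. -/
noncomputable def cf {X : Type*} [MeasurableSpace X] (μ : Measure X) [IsFiniteMeasure μ]
    (p : ℝ) [h1 : Fact (1 ≤ ENNReal.ofReal p)] (B : ℕ → Set X) (w : List Bool) :
    Lp ℂ (ENNReal.ofReal p) μ →L[ℂ] ℂ :=
  (((am μ B (true :: w) * am μ B (false :: w) : ℝ) : ℂ))⁻¹ •
    ((am μ B (false :: w) : ℂ) • intCLM μ p (atom B (true :: w)) -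
      (am μ B (true :: w) : ℂ) • intCLM μ p (atom B (false :: w)))

lemma am_nonneg {X : Type*} [MeasurableSpace X] (μ : Measure X) (B : ℕ → Set X)
    (w : List Bool) : 0 ≤ am μ B w := measureReal_nonneg

lemma am_tree {X : Type*} [MeasurableSpace X] (μ : Measure X) [IsFiniteMeasure μ]
    (B : ℕ → Set X) (hB : ∀ n, MeasurableSet (B n)) (w : List Bool) :
    am μ B w = am μ B (true :: w) + am μ B (false :: w) := measure_tree μ B hB w

lemma haar_abs_le {X : Type*} [MeasurableSpace X] (μ : Measure X) [IsFiniteMeasure μ]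
    (B : ℕ → Set X) (hB : ∀ n, MeasurableSet (B n)) (w : List Bool) (x : X) :
    |haar B (am μ B) w x| ≤ 1 := by
  unfold haar
  split_ifs
  · exact hv_abs_le _ (am_nonneg μ B) (am_tree μ B hB) w _
  · simp

lemma memLp_of_le {X : Type*} [MeasurableSpace X] (μ : Measure X) [IsFiniteMeasure μ]
    (q : ENNReal) (h : X → ℂ) (hm : Measurable h) (hb : ∀ x, ‖h x‖ ≤ 1) : MemLp h q μ :=
  MemLp.of_bound hm.aestronglyMeasurable 1 (Filter.Eventually.of_forall hb)

lemma cf_gam_mean {X : Type*} [MeasurableSpace X] (μ : Measure X) [IsFiniteMeasure μ]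
    (p : ℝ) [h1 : Fact (1 ≤ ENNReal.ofReal p)] (B : ℕ → Set X) (hB : ∀ n, MeasurableSet (B n))
    (f : Lp ℂ (ENNReal.ofReal p) μ) (w : List Bool) :
    (am μ B w : ℂ) * gam (am μ B) (fun w => cf μ p B w f) (fun _ => 1)
      (intCLM μ p (atom B []) f / (am μ B [] : ℂ)) w = intCLM μ p (atom B w) f := by
  apply gam_mean (am μ B) (am_nonneg μ B) (am_tree μ B hB) (fun w => intCLM μ p (atom B w) f)
  · intro w
    exact setIntegral_tree μ B hB _ (lp_integrable f) w
  · intro w hw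
    simp only [am] at hw
    rw [measureReal_eq_zero_iff] at hw
    simp only [intCLM_apply]
    exact setIntegral_measure_zero _ hw
  · intro w
    simp [cf]

lemma haar_sign_bound (p : ℝ) (hp : 1 < p) [h1 : Fact (1 ≤ ENNReal.ofReal p)] :
    ∃ C : ℝ, 0 ≤ C ∧ ∀ {X : Type*} [MeasurableSpace X] (μ : Measure X) [IsFiniteMeasure μ]
    (B : ℕ → Set X) (_ : ∀ n, MeasurableSet (B n))
    (h : List Bool → Lp ℂ (ENNReal.ofReal p) μ)
    (_ : ∀ w, h w =ᵐ[μ] fun x => (haar B (am μ B) w x : ℂ))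
    (f : Lp ℂ (ENNReal.ofReal p) μ) (ε : List Bool → ℝ) (_ : ∀ w, ε w = 1 ∨ ε w = -1) (n : ℕ),
    ‖∑ w ∈ Wn n, (ε w : ℂ) • (cf μ p B w f • h w)‖ ≤ C * ‖f‖ := by
  obtain ⟨C, hC0, hC⟩ := burk_complex p hp
  refine ⟨C ^ (p⁻¹), by positivity, ?_⟩
  intro X _ μ _ B hB h hh f ε hε n
  have hp0 : 0 < p := by linarith
  set c : List Bool → ℂ := fun w => cf μ p B w f
  set m := gam (am μ B) c (fun _ => 1) (intCLM μ p (atom B []) f / (am μ B [] : ℂ)) with hm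
  have key := hC (am μ B) (am_nonneg μ B) (am_tree μ B hB) c m (gam (am μ B) c ε 0) ε hε
    (by intro w b; simp [hm, gam]) rfl (fun w b => rfl) n
  set G : Lp ℂ (ENNReal.ofReal p) μ := ∑ w ∈ Wn n, (ε w : ℂ) • (cf μ p B w f • h w) with hG
  have hGae : G =ᵐ[μ] fun x => gam (am μ B) c ε 0 (path B n x) := by
    have := lp_sum_ae (Wn n) h _ hh (fun w => (ε w : ℂ) * c w)
    have e : G = ∑ w ∈ Wn n, ((ε w : ℂ) * c w) • h w := by
      rw [hG]; exact Finset.sum_congr rfl fun w _ => smul_smul _ _ _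
    rw [e]
    filter_upwards [this] with x hx
    rw [hx, ← sum_haar]
    simp [mul_assoc]
  have hGn : ‖G‖ ^ p = wsum n (fun w => am μ B w * ‖gam (am μ B) c ε 0 w‖ ^ p) := by
    rw [lp_norm_rpow hp G]
    have := integral_path μ B hB n (fun w => ‖gam (am μ B) c ε 0 w‖ ^ p)
    simp only [am] at this ⊢
    rw [← this]
    apply integral_congr_ae
    filter_upwards [hGae] with x hx
    rw [hx]
  have hfn : wsum n (fun w => am μ B w * ‖m w‖ ^ p) ≤ ‖f‖ ^ p := by
    calc wsum n (fun w => am μ B w * ‖m w‖ ^ p)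
        ≤ wsum n (fun w => ∫ x in atom B w, ‖f x‖ ^ p ∂μ) := by
          apply wsum_mono
          intro w _
          exact setIntegral_jensen μ hp f _ _ (cf_gam_mean μ p B hB f w)
      _ = ‖f‖ ^ p := by
          rw [wsum_tree n _ (fun w => setIntegral_tree μ B hB _ (lp_integrable_rpow hp f) w),
            atom_nil, lp_norm_rpow hp f]
          simp
  have h3 : ‖G‖ ^ p ≤ C * ‖f‖ ^ p := by
    rw [hGn]; exact key.trans (by gcongr)
  have h4 : C * ‖f‖ ^ p = (C ^ (p⁻¹) * ‖f‖) ^ p := by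
    rw [Real.mul_rpow (by positivity) (norm_nonneg _), ← Real.rpow_mul hC0,
      inv_mul_cancel₀ hp0.ne', Real.rpow_one]
  rw [h4] at h3
  exact (Real.rpow_le_rpow_iff (norm_nonneg _) (by positivity) hp0).1 h3


/-- Abstract form of what is needed from the Haar system. -/
lemma haar_fin_bound {E : Type*} [NormedAddCommGroup E] [NormedSpace ℂ E]
    (v : List Bool → E) (K : ℝ)
    (h : ∀ (ε : List Bool → ℝ), (∀ w, ε w = 1 ∨ ε w = -1) → ∀ n : ℕ,
      ‖∑ w ∈ Wn n, (ε w : ℂ) • v w‖ ≤ K) (F : Finset (List Bool)) (θ : List Bool → ℝ)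
    (hθ : ∀ w, |θ w| ≤ 1) : ‖∑ w ∈ F, (θ w : ℂ) • v w‖ ≤ K := by
  classical
  obtain ⟨n, hn⟩ : ∃ n, F ⊆ Wn n := by
    refine ⟨F.sup List.length + 1, fun w hw => ?_⟩
    rw [mem_Wn]
    exact Nat.lt_succ_of_le (Finset.le_sup (f := List.length) hw)
  have := sign_conv (Wn n) v K 0 (fun ε hε => by simpa using h ε hε n)
    (fun w => if w ∈ F then θ w else 0) (fun w => by
      split_ifs
      · exact hθ w
      · simp)
  rw [zero_add] at this
  convert this using 2
  rw [← Finset.sum_subset hn]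
  · apply Finset.sum_congr rfl
    intro w hw
    simp [hw]
  · intro w _ hw
    simp [hw]

/-- Functions of finitely many bits are dense. -/
lemma dense_path {X : Type*} [MeasurableSpace X] [MeasurableSpace.CountablyGenerated X]
    (μ : Measure X) [IsFiniteMeasure μ] (p : ℝ) [h1 : Fact (1 ≤ ENNReal.ofReal p)] :
    ∃ B : ℕ → Set X, (∀ n, MeasurableSet (B n)) ∧
    Dense {f : Lp ℂ (ENNReal.ofReal p) μ | ∃ (N : ℕ) (φ : List Bool → ℂ),
      f =ᵐ[μ] fun x => φ (path B N x)} := by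
  classical
  set B := MeasurableSpace.natGeneratingSequence X with hBdef
  have hB : ∀ n, MeasurableSet (B n) := MeasurableSpace.measurableSet_natGeneratingSequence
  refine ⟨B, hB, ?_⟩
  set D := {f : Lp ℂ (ENNReal.ofReal p) μ | ∃ (N : ℕ) (φ : List Bool → ℂ),
      f =ᵐ[μ] fun x => φ (path B N x)} with hD
  have lift : ∀ (N k : ℕ) {Y : Type} (φ : List Bool → Y) (x : X),
      φ (path B N x) = (fun w : List Bool => φ (w.drop k)) (path B (N + k) x) := by
    intro N k Y φ x
    simp only [path_drop]
  set 𝒜 : Set (Set X) := {S | ∃ (N : ℕ) (T : Set (List Bool)), S = {x | path B N x ∈ T}} with hA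
  have hAlg : IsSetAlgebra 𝒜 := by
    refine ⟨⟨0, ∅, by simp⟩, ?_, ?_⟩
    · rintro S ⟨N, T, rfl⟩
      exact ⟨N, Tᶜ, by ext x; simp⟩
    · rintro S S' ⟨N, T, rfl⟩ ⟨N', T', rfl⟩
      refine ⟨N + N', {w | w.drop N' ∈ T ∨ w.drop N ∈ T'}, ?_⟩
      ext x
      simp only [Set.mem_union, Set.mem_ofPred_eq, path_drop]
      rw [Nat.add_comm N N', path_drop]
  have hgen : ‹MeasurableSpace X› = MeasurableSpace.generateFrom 𝒜 := by
    apply le_antisymm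
    · rw [← MeasurableSpace.generateFrom_natGeneratingSequence X]
      apply MeasurableSpace.generateFrom_mono
      rintro _ ⟨n, rfl⟩
      refine ⟨n + 1, {w | w.head? = some true}, ?_⟩
      ext x
      simp [path, hBdef]
    · apply MeasurableSpace.generateFrom_le
      rintro S ⟨N, T, rfl⟩
      have := measurable_path B hB N (fun w => decide (w ∈ T)) (measurableSet_singleton true)
      convert this using 1
      ext x; simp
  have hMD := Measure.MeasureDense.of_generateFrom_isSetAlgebra_finite μ hAlg hgen
  have : Fact (ENNReal.ofReal p ≠ ⊤) := ⟨ENNReal.ofReal_ne_top⟩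
  intro f
  have hadd : ∀ f ∈ closure D, ∀ g ∈ closure D, f + g ∈ closure D := by
    intro f hf g hg
    refine map_mem_closure₂ continuous_add hf hg ?_
    rintro f ⟨N, φ, hf⟩ g ⟨N', φ', hg⟩
    refine ⟨N + N', fun w => φ (w.drop N') + φ' (w.drop N), ?_⟩
    filter_upwards [Lp.coeFn_add f g, hf, hg] with x h1 h2 h3
    rw [h1, Pi.add_apply, h2, h3, path_drop, Nat.add_comm N N', path_drop]
  refine Lp.induction ENNReal.ofReal_ne_top (motive := fun f => f ∈ closure D) ?_ ?_ ?_ f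
  · intro c s hs hμs
    have h := hMD.indicatorConstLp_subset_closure (ENNReal.ofReal p) c ⟨s, hs, hμs.ne, rfl⟩
    refine closure_mono ?_ h
    rintro _ ⟨S, ⟨N, T, rfl⟩, hμS, rfl⟩
    refine ⟨N, T.indicator (fun _ => c), ?_⟩
    filter_upwards [indicatorConstLp_coeFn (p := ENNReal.ofReal p) (μ := μ)
      (hs := hMD.measurable _ ⟨N, T, rfl⟩) (hμs := hμS) (c := c)] with x hx
    rw [hx]
    simp [Set.indicator]
  · intro f g hf hg _ h1 h2
    exact hadd _ h1 _ h2
  · exact isClosed_closure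

lemma int_path {X : Type*} [MeasurableSpace X]
    (μ : Measure X) [IsFiniteMeasure μ] (p : ℝ) [h1 : Fact (1 ≤ ENNReal.ofReal p)]
    (B : ℕ → Set X) (hB : ∀ n, MeasurableSet (B n)) (N : ℕ) (φ : List Bool → ℂ)
    (f : Lp ℂ (ENNReal.ofReal p) μ) (hf : f =ᵐ[μ] fun x => φ (path B N x)) (w : List Bool)
    (hw : N ≤ w.length) :
    intCLM μ p (atom B w) f = (am μ B w : ℂ) * φ (w.drop (w.length - N)) := by
  rw [intCLM_apply]
  have : ∫ x in atom B w, f x ∂μ = ∫ x in atom B w, φ (w.drop (w.length - N)) ∂μ := by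
    apply setIntegral_congr_ae (measurableSet_atom B hB w)
    filter_upwards [hf] with x hx hxw
    rw [hx]
    have hxw' : path B w.length x = w := hxw
    have h2 := path_drop B N (w.length - N) x
    rw [Nat.add_sub_cancel' hw, hxw'] at h2
    rw [h2]
  rw [this]
  simp [am]

theorem haar_package {X : Type*} [MeasurableSpace X] [MeasurableSpace.CountablyGenerated X]
    (μ : Measure X) [IsFiniteMeasure μ] (p : ℝ) (hp : 1 < p) [h1 : Fact (1 ≤ ENNReal.ofReal p)] :
    ∃ (h : Option (List Bool) → X → ℝ) (hL : Option (List Bool) → Lp ℂ (ENNReal.ofReal p) μ)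
      (c : Option (List Bool) → Lp ℂ (ENNReal.ofReal p) μ →L[ℂ] ℂ) (C : ℝ), 0 ≤ C ∧
      (∀ i, Measurable (h i)) ∧ (∀ i x, |h i x| ≤ 1) ∧ (∀ i, hL i =ᵐ[μ] fun x => (h i x : ℂ)) ∧
      (∀ (F : Finset (Option (List Bool))) (θ : Option (List Bool) → ℝ), (∀ i, |θ i| ≤ 1) →
        ∀ f, ‖∑ i ∈ F, (θ i : ℂ) • (c i f • hL i)‖ ≤ C * ‖f‖) ∧
      Dense {f : Lp ℂ (ENNReal.ofReal p) μ | ∃ F : Finset (Option (List Bool)),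
        (∀ i, i ∉ F → c i f = 0) ∧ ∑ i ∈ F, c i f • hL i = f} := by
  classical
  obtain ⟨B, hB, hD⟩ := dense_path μ p
  obtain ⟨C, hC0, hC⟩ := haar_sign_bound p hp
  set h : Option (List Bool) → X → ℝ := fun i => i.elim (fun _ => 1) (haar B (am μ B)) with hh
  have hmeas : ∀ i, Measurable (h i) := by
    rintro (_ | w)
    · exact measurable_const
    · exact haar_meas B hB _ w
  have hle : ∀ i x, |h i x| ≤ 1 := by
    rintro (_ | w) x
    · simp [hh]
    · exact haar_abs_le μ B hB w x
  have hmem : ∀ i, MemLp (fun x => (h i x : ℂ)) (ENNReal.ofReal p) μ := fun i =>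
    memLp_of_le μ _ _ (Complex.measurable_ofReal.comp (hmeas i)) (fun x => by
      rw [Complex.norm_real]; exact hle i x)
  set hL : Option (List Bool) → Lp ℂ (ENNReal.ofReal p) μ := fun i => (hmem i).toLp with hhL
  have hLae : ∀ i, hL i =ᵐ[μ] fun x => (h i x : ℂ) := fun i => (hmem i).coeFn_toLp
  set c : Option (List Bool) → Lp ℂ (ENNReal.ofReal p) μ →L[ℂ] ℂ := fun i =>
    i.elim ((am μ B [] : ℂ)⁻¹ • intCLM μ p (atom B [])) (cf μ p B) with hc
  refine ⟨h, hL, c, ‖c none‖ * ‖hL none‖ + C, by positivity, hmeas, hle, hLae, ?_, ?_⟩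
  · intro F θ hθ f
    set θ' : Option (List Bool) → ℝ := fun i => if i ∈ F then θ i else 0 with hθ'
    have hθ'1 : ∀ i, |θ' i| ≤ 1 := by
      intro i
      simp only [hθ']
      split_ifs
      · exact hθ i
      · simp
    have hsub : F ⊆ Finset.insertNone (Finset.eraseNone F) := by
      intro i hi
      cases i with
      | none => simp
      | some w => simpa using hi
    have e : ∑ i ∈ F, (θ i : ℂ) • (c i f • hL i) =
        ∑ i ∈ Finset.insertNone (Finset.eraseNone F), (θ' i : ℂ) • (c i f • hL i) := by
      rw [← Finset.sum_subset hsub]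
      · exact Finset.sum_congr rfl fun i hi => by simp [hθ', hi]
      · intro i _ hi
        simp [hθ', hi]
    rw [e, Finset.sum_insertNone, add_mul]
    refine (norm_add_le _ _).trans (add_le_add ?_ ?_)
    · rw [norm_smul, norm_smul, Complex.norm_real]
      have h1 := (c none).le_opNorm f
      have h2 := hθ'1 none
      calc ‖θ' none‖ * (‖c none f‖ * ‖hL none‖) ≤ 1 * ((‖c none‖ * ‖f‖) * ‖hL none‖) := by
            gcongr
            exact h2
        _ = _ := by ring
    · exact haar_fin_bound (fun w => cf μ p B w f • hL (some w)) (C * ‖f‖)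
        (fun ε hε n => hC μ B hB (fun w => hL (some w)) (fun w => hLae (some w)) f ε hε n)
        (Finset.eraseNone F) (fun w => θ' (some w)) (fun w => hθ'1 _)
  · refine hD.mono ?_
    rintro f ⟨N, φ, hf⟩
    have hI := int_path μ p B hB N φ f hf
    refine ⟨Finset.insertNone (Wn N), ?_, ?_⟩
    · rintro (_ | w) hw
      · simp at hw
      · simp only [Finset.some_mem_insertNone, mem_Wn, not_lt] at hw
        simp only [hc, Option.elim, cf]
        have d1 : (true :: w).drop ((true :: w).length - N) = w.drop (w.length - N) := by
          rw [List.length_cons, Nat.sub_add_comm hw, List.drop_succ_cons]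
        have d2 : (false :: w).drop ((false :: w).length - N) = w.drop (w.length - N) := by
          rw [List.length_cons, Nat.sub_add_comm hw, List.drop_succ_cons]
        have i1 := hI (true :: w) (by simp; omega)
        have i2 := hI (false :: w) (by simp; omega)
        rw [d1] at i1
        rw [d2] at i2
        simp only [_root_.smul_apply, _root_.sub_apply, i1, i2,
          smul_eq_mul]
        ring
    · apply Lp.ext
      have hs := lp_sum_ae (Finset.insertNone (Wn N)) hL _ hLae (fun i => c i f)
      filter_upwards [hs, hf, ae_path_ne μ B N] with x h1 h2 h3
      rw [h1, h2, Finset.sum_insertNone]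
      have e1 := sum_haar B (am μ B) (fun w => cf μ p B w f) (fun _ => 1)
        (intCLM μ p (atom B []) f / (am μ B [] : ℂ)) N x
      have e2 := cf_gam_mean μ p B hB f (path B N x)
      rw [hI (path B N x) (by rw [length_path]), length_path, Nat.sub_self, List.drop_zero] at e2
      have h3' : (am μ B (path B N x) : ℂ) ≠ 0 := by exact_mod_cast h3
      have e3 := mul_left_cancel₀ h3' e2
      rw [← e3, ← e1]
      simp [hc, hh, div_eq_inv_mul]


lemma exists_half {X : Type*} [MeasurableSpace X] [StandardBorelSpace X]
    (μ : Measure X) [IsFiniteMeasure μ] [NullSingletonClass μ] (E : Set X) (_hE : MeasurableSet E) :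
    ∃ A : Set X, MeasurableSet A ∧ μ.real (E ∩ A) = μ.real E / 2 := by
  set φ := embeddingReal X with hφdef
  have hφ : MeasurableEmbedding φ := measurableEmbedding_embeddingReal X
  set ν := (μ.restrict E).map φ with hν
  have hνs : ∀ t, ν {t} = 0 := by
    intro t
    rw [hν, Measure.map_apply hφ.measurable (measurableSet_singleton t)]
    have : (φ ⁻¹' {t}).Subsingleton := fun x hx y hy => hφ.injective (by
      rw [Set.mem_preimage, Set.mem_singleton_iff] at hx hy; rw [hx, hy])
    exact this.measure_zero _
  have hreal : ∀ t, ν.real (Set.Iic t) = μ.real (E ∩ φ ⁻¹' (Set.Iic t)) := by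
    intro t
    rw [hν, map_measureReal_apply hφ.measurable measurableSet_Iic,
      measureReal_restrict_apply (hφ.measurable measurableSet_Iic), Set.inter_comm]
  have huniv : ν Set.univ = μ E := by
    rw [hν, Measure.map_apply hφ.measurable MeasurableSet.univ]; simp
  by_cases h0 : μ.real E = 0
  · refine ⟨∅, MeasurableSet.empty, by simp [h0]⟩
  have hpos : 0 < μ.real E := lt_of_le_of_ne measureReal_nonneg (Ne.symm h0)
  have hcont : Continuous (fun t => ν.real (Set.Iic t)) := by
    have e : (fun t => ν.real (Set.Iic t)) =
        fun t => ∫ x, (Set.Iic t).indicator (fun _ => (1 : ℝ)) x ∂ν := by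
      funext t
      rw [integral_indicator measurableSet_Iic]; simp
    rw [e, continuous_iff_continuousAt]
    intro t
    apply continuousAt_of_dominated (bound := fun _ => 1)
    · exact Filter.Eventually.of_forall fun s =>
        (measurable_const.indicator measurableSet_Iic).aestronglyMeasurable
    · refine Filter.Eventually.of_forall fun s => Filter.Eventually.of_forall fun x => ?_
      simp only [Set.indicator]
      split_ifs <;> simp
    · exact integrable_const _
    · have : ∀ᵐ x ∂ν, x ≠ t := by
        rw [ae_iff]; simpa using hνs t
      filter_upwards [this] with x hx
      rcases lt_or_gt_of_ne hx with h | h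
      · apply ContinuousAt.congr (f := fun _ => (1 : ℝ)) continuousAt_const
        filter_upwards [lt_mem_nhds h] with s hs
        simp [Set.indicator, le_of_lt hs]
      · apply ContinuousAt.congr (f := fun _ => (0 : ℝ)) continuousAt_const
        filter_upwards [gt_mem_nhds h] with s hs
        simp [Set.indicator, hs]
  have htop : Filter.Tendsto (fun t => ν.real (Set.Iic t)) Filter.atTop (nhds (μ.real E)) := by
    have := tendsto_measure_Iic_atTop ν
    rw [huniv] at this
    exact (ENNReal.tendsto_toReal (measure_ne_top μ E)).comp this
  have hbot : Filter.Tendsto (fun t => ν.real (Set.Iic t)) Filter.atBot (nhds 0) := by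
    have := tendsto_measure_iInter_atBot (μ := ν) (s := fun t : ℝ => Set.Iic t)
      (fun t => measurableSet_Iic.nullMeasurableSet) (fun s t hst => Set.Iic_subset_Iic.2 hst)
      ⟨0, measure_ne_top ν _⟩
    rw [show ⋂ t : ℝ, Set.Iic t = ∅ from by
      ext x; simpa using ⟨x - 1, by linarith⟩, measure_empty] at this
    exact (ENNReal.tendsto_toReal ENNReal.zero_ne_top).comp this
  obtain ⟨t1, ht1⟩ := (hbot.eventually (gt_mem_nhds (half_pos hpos))).exists
  obtain ⟨t2, ht2⟩ := (htop.eventually (lt_mem_nhds (half_lt_self hpos))).exists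
  obtain ⟨t, ht⟩ := mem_range_of_exists_le_of_exists_ge hcont ⟨t1, ht1.le⟩ ⟨t2, ht2.le⟩
  exact ⟨φ ⁻¹' Set.Iic t, hφ.measurable measurableSet_Iic, by rw [← hreal]; exact ht⟩

lemma path_congr {X : Type*} (B B' : ℕ → Set X) (n : ℕ) (h : ∀ k < n, B k = B' k) (x : X) :
    path B n x = path B' n x := by
  induction n with
  | zero => rfl
  | succ n ih => simp only [path]; rw [ih fun k hk => h k (by omega), h n (by omega)]

lemma atom_congr {X : Type*} (B B' : ℕ → Set X) (w : List Bool) (h : ∀ k < w.length, B k = B' k) :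
    atom B w = atom B' w := by
  ext x
  simp only [atom, Set.mem_ofPred_eq, path_congr B B' _ h]

lemma exists_bits {X : Type*} [MeasurableSpace X] [StandardBorelSpace X]
    (μ : Measure X) [IsFiniteMeasure μ] [NullSingletonClass μ] (N : ℕ) :
    ∃ B : ℕ → Set X, (∀ n, MeasurableSet (B n)) ∧ ∀ w : List Bool, w.length < N →
      am μ B (true :: w) = am μ B w / 2 := by
  induction N with
  | zero => exact ⟨fun _ => ∅, fun _ => MeasurableSet.empty, fun w hw => by simp at hw⟩
  | succ N ih =>
    obtain ⟨B, hB, hh⟩ := ih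
    choose H hH hH2 using fun w => exists_half μ (atom B w) (measurableSet_atom B hB w)
    set A : Set X := ⋃ w ∈ {w : List Bool | w.length = N}, atom B w ∩ H w with hA
    have hAm : MeasurableSet A := by
      apply MeasurableSet.biUnion (Set.to_countable _)
      intro w _
      exact (measurableSet_atom B hB w).inter (hH w)
    refine ⟨Function.update B N A, ?_, ?_⟩
    · intro n
      by_cases hn : n = N
      · subst hn; simpa using hAm
      · simpa [Function.update_of_ne hn] using hB n
    · intro w hw
      have hc : ∀ v : List Bool, v.length ≤ N → atom (Function.update B N A) v = atom B v := by
        intro v hv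
        apply atom_congr
        intro k hk
        rw [Function.update_of_ne (by omega)]
      by_cases hw' : w.length < N
      · simp only [am]
        rw [hc w hw'.le, hc (true :: w) (by simpa using hw')]
        exact hh w hw'
      · have hwN : w.length = N := by omega
        simp only [am]
        rw [atom_true, hc w hwN.le, hwN, Function.update_self, ← hH2]
        congr 1
        ext x
        simp only [hA, Set.mem_inter_iff, Set.mem_iUnion, Set.mem_ofPred_eq]
        constructor
        · rintro ⟨h1, v, hv, h2, h3⟩
          have e1 : path B w.length x = w := h1
          have e2 : path B v.length x = v := h2
          have : v = w := by rw [← e1, ← e2, hv, hwN]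
          subst this
          exact ⟨h1, h3⟩
        · rintro ⟨h1, h3⟩
          exact ⟨h1, w, hwN, h1, h3⟩

/-- Random walk on words. -/
def rwk (ε : ℕ → ℝ) : List Bool → ℝ
  | [] => 0
  | b :: w => rwk ε w + ε w.length * (if b then 1 else -1)

/-- signs -/
noncomputable def rad {X : Type*} (B : ℕ → Set X) (k : ℕ) (x : X) : ℝ :=
  open Classical in if x ∈ B k then 1 else -1

lemma rad_sum {X : Type*} (B : ℕ → Set X) (ε : ℕ → ℝ) (n : ℕ) (x : X) :
    ∑ k ∈ Finset.range n, ε k * rad B k x = rwk ε (path B n x) := by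
  induction n with
  | zero => simp [path, rwk]
  | succ n ih =>
    rw [Finset.sum_range_succ, ih]
    by_cases h : x ∈ B n <;> simp [path, rwk, rad, length_path, h]

lemma rad_l2 {X : Type*} [MeasurableSpace X] (μ : Measure X) [IsFiniteMeasure μ]
    (B : ℕ → Set X) (hB : ∀ n, MeasurableSet (B n)) (N : ℕ)
    (hh : ∀ w : List Bool, w.length < N → am μ B (true :: w) = am μ B w / 2)
    (ε : ℕ → ℝ) (hε : ∀ k, |ε k| ≤ 1) :
    ∫ x, (∑ k ∈ Finset.range N, ε k * rad B k x) ^ 2 ∂μ ≤ N * μ.real Set.univ := by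
  simp only [rad_sum]
  rw [integral_path μ B hB N (fun w => rwk ε w ^ 2)]
  have : ∀ n ≤ N, wsum n (fun w => μ.real (atom B w) * rwk ε w ^ 2) ≤ n * μ.real Set.univ := by
    intro n
    induction n with
    | zero => intro _; simp [wsum, rwk]
    | succ n ih =>
      intro hn
      have ih' := ih (by omega)
      have e : wsum n (fun w => μ.real (atom B w) * 1) = μ.real Set.univ := by
        rw [wsum_tree, atom_nil, mul_one]
        intro w
        simp only [mul_one]
        exact measure_tree μ B hB w
      calc wsum (n + 1) (fun w => μ.real (atom B w) * rwk ε w ^ 2)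
          ≤ wsum n (fun w => μ.real (atom B w) * rwk ε w ^ 2 + μ.real (atom B w) * 1) := by
            simp only [wsum]
            apply wsum_mono
            intro w hw
            have h1 : μ.real (atom B (true :: w)) = μ.real (atom B w) / 2 := hh w (by omega)
            have h2 : μ.real (atom B (false :: w)) = μ.real (atom B w) / 2 := by
              have := measure_tree μ B hB w
              linarith
            rw [h1, h2]
            simp only [rwk]
            have h3 : (ε w.length) ^ 2 ≤ 1 := by
              rw [← sq_abs]; exact pow_le_one₀ (abs_nonneg _) (hε _)
            have h4 : 0 ≤ μ.real (atom B w) := measureReal_nonneg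
            simp only [if_true, Bool.false_eq_true, if_false]
            nlinarith [mul_le_mul_of_nonneg_left h3 h4]
        _ ≤ _ := by
            rw [wsum_add, e]; push_cast; linarith
  exact this N le_rfl


lemma rad_lp {X : Type*} [MeasurableSpace X] [StandardBorelSpace X]
    (μ : Measure X) [IsFiniteMeasure μ] [NullSingletonClass μ] (p : ℝ) (hp : 1 < p)
    [h1 : Fact (1 ≤ ENNReal.ofReal p)] (δ : ℝ)
    (hδ : 0 < δ) :
    ∃ (N : ℕ) (r : ℕ → X → ℝ), 0 < N ∧ (∀ k, Measurable (r k)) ∧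
      (∀ k x, r k x = 1 ∨ r k x = -1) ∧
      ∀ (ε : ℕ → ℝ), (∀ k, |ε k| ≤ 1) → ∀ G : Lp ℂ (ENNReal.ofReal p) μ,
        (∀ᵐ x ∂μ, ‖G x‖ ≤ |(1 / (N : ℝ)) * ∑ k ∈ Finset.range N, ε k * r k x|) → ‖G‖ ≤ δ := by
  have hp0 : 0 < p := by linarith
  set m := μ.real Set.univ with hm
  have hm0 : 0 ≤ m := measureReal_nonneg
  set η : ℝ := (δ ^ p / (2 * (m + 1))) ^ (p⁻¹) with hη
  have hη0 : 0 < η := by positivity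
  have hηp : η ^ p = δ ^ p / (2 * (m + 1)) := by
    rw [hη, ← Real.rpow_mul (by positivity), inv_mul_cancel₀ hp0.ne', Real.rpow_one]
  obtain ⟨N, hN⟩ := exists_nat_gt (2 * m / (η ^ 2 * δ ^ p))
  have hN0 : 0 < (N : ℝ) := lt_of_le_of_lt (by positivity) hN
  obtain ⟨B, hB, hh⟩ := exists_bits μ N
  have hrm : ∀ k, Measurable (rad B k) := by
    intro k
    classical
    exact Measurable.ite (hB k) measurable_const measurable_const
  have hr1 : ∀ k x, rad B k x = 1 ∨ rad B k x = -1 := by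
    intro k x
    unfold rad
    split_ifs <;> simp
  refine ⟨N, rad B, by exact_mod_cast hN0, hrm, hr1, ?_⟩
  intro ε hε G hG
  have h2 := rad_l2 μ B hB N hh ε hε
  have hsm : Measurable (fun x => ∑ k ∈ Finset.range N, ε k * rad B k x) := by
    apply Finset.measurable_fun_sum
    intro k _
    exact (hrm k).const_mul _
  have hsb : ∀ x, |∑ k ∈ Finset.range N, ε k * rad B k x| ≤ N := by
    intro x
    refine (Finset.abs_sum_le_sum_abs _ _).trans ?_
    calc ∑ k ∈ Finset.range N, |ε k * rad B k x| ≤ ∑ k ∈ Finset.range N, (1 : ℝ) := by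
          apply Finset.sum_le_sum
          intro k _
          rw [abs_mul]
          have : |rad B k x| = 1 := by rcases hr1 k x with h | h <;> simp [h]
          rw [this, mul_one]; exact hε k
      _ = N := by simp
  have hsqint : Integrable (fun x => (∑ k ∈ Finset.range N, ε k * rad B k x) ^ 2) μ := by
    apply Integrable.of_bound (hsm.pow_const 2).aestronglyMeasurable ((N : ℝ) ^ 2)
    refine Filter.Eventually.of_forall fun x => ?_
    rw [Real.norm_eq_abs, abs_pow]
    exact pow_le_pow_left₀ (abs_nonneg _) (hsb x) 2
  have key : ‖G‖ ^ p ≤ δ ^ p := by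
    rw [lp_norm_rpow hp G]
    calc ∫ x, ‖G x‖ ^ p ∂μ
        ≤ ∫ x, (η ^ p + (1 / (η ^ 2 * N ^ 2)) * (∑ k ∈ Finset.range N, ε k * rad B k x) ^ 2) ∂μ := by
          apply integral_mono_ae (lp_integrable_rpow hp G)
            ((integrable_const _).add (hsqint.const_mul _))
          filter_upwards [hG] with x hx
          set s := ∑ k ∈ Finset.range N, ε k * rad B k x with hs
          have hb := hsb x
          rw [← hs] at hb
          change ‖G x‖ ^ p ≤ η ^ p + (1 / (η ^ 2 * N ^ 2)) * s ^ 2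
          have hnn : 0 ≤ (1 / (η ^ 2 * N ^ 2)) * s ^ 2 := by positivity
          have hηpp : 0 ≤ η ^ p := by positivity
          rw [abs_mul, abs_of_pos (by positivity : 0 < 1 / (N : ℝ))] at hx
          have hle1 : (1 / (N : ℝ)) * |s| ≤ 1 := by
            rw [one_div, inv_mul_le_iff₀ hN0, mul_one]; exact hb
          by_cases hc : (1 / (N : ℝ)) * |s| ≤ η
          · have : ‖G x‖ ^ p ≤ η ^ p := Real.rpow_le_rpow (norm_nonneg _) (hx.trans hc) hp0.le
            linarith
          · push Not at hc
            have h3 : ‖G x‖ ^ p ≤ 1 := Real.rpow_le_one (norm_nonneg _) (hx.trans hle1) hp0.le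
            have h4 : η ^ 2 ≤ ((1 / (N : ℝ)) * |s|) ^ 2 := pow_le_pow_left₀ hη0.le hc.le 2
            have h5 : 1 ≤ (1 / (η ^ 2 * N ^ 2)) * s ^ 2 := by
              rw [mul_pow, sq_abs] at h4
              rw [one_div, ← div_eq_inv_mul, one_le_div (by positivity)]
              calc η ^ 2 * N ^ 2 ≤ (1 / (N : ℝ)) ^ 2 * s ^ 2 * N ^ 2 := by gcongr
                _ = s ^ 2 := by field_simp
            linarith
      _ = m * η ^ p + (1 / (η ^ 2 * N ^ 2)) * ∫ x, (∑ k ∈ Finset.range N, ε k * rad B k x) ^ 2 ∂μ := by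
          rw [integral_add (integrable_const _) (hsqint.const_mul _), integral_const_mul]
          simp [hm]
      _ ≤ m * η ^ p + (1 / (η ^ 2 * N ^ 2)) * (N * m) := by gcongr
      _ ≤ δ ^ p / 2 + δ ^ p / 2 := by
          have hdp : 0 < δ ^ p := by positivity
          apply add_le_add
          · rw [hηp, mul_div_assoc', div_le_div_iff₀ (by positivity) (by positivity)]
            nlinarith
          · rw [div_lt_iff₀ (by positivity)] at hN
            have : (1 / (η ^ 2 * (N : ℝ) ^ 2)) * (N * m) = m / (η ^ 2 * N) := by field_simp
            rw [this, div_le_div_iff₀ (by positivity) (by positivity)]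
            nlinarith
      _ = δ ^ p := by ring
  exact (Real.rpow_le_rpow_iff (norm_nonneg _) hδ.le hp0).1 key

lemma hasSum_of_dense_bound {J E : Type*} [NormedAddCommGroup E] [NormedSpace ℂ E]
    (g : J → E) (gs : J → E →L[ℂ] ℂ) (K : ℝ)
    (hK : ∀ (F : Finset J) (f : E), ‖∑ j ∈ F, gs j f • g j‖ ≤ K * ‖f‖) (D : Set E) (hD : Dense D)
    (hs : ∀ f ∈ D, HasSum (fun j => gs j f • g j) f) (f : E) :
    HasSum (fun j => gs j f • g j) f := by
  unfold HasSum
  rw [Metric.tendsto_nhds]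
  intro ε hε
  set K' := |K| + 1 with hK'
  have hK'0 : 0 < K' := by positivity
  obtain ⟨d, hdD, hd⟩ := Metric.dense_iff.1 hD f (ε / (3 * K')) (by positivity)
  rw [Metric.mem_ball, dist_comm, dist_eq_norm] at hdD
  have h1 := (Metric.tendsto_nhds.1 (hs d hd)) (ε / 3) (by positivity)
  filter_upwards [h1] with F hF
  rw [dist_eq_norm] at hF ⊢
  have e : ∑ j ∈ F, gs j f • g j - f = ∑ j ∈ F, gs j (f - d) • g j +
      (∑ j ∈ F, gs j d • g j - d) + (d - f) := by
    simp only [map_sub, sub_smul, Finset.sum_sub_distrib]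
    abel
  rw [e]
  have h2 : ‖∑ j ∈ F, gs j (f - d) • g j‖ < ε / 3 := by
    calc _ ≤ K * ‖f - d‖ := hK F _
      _ ≤ K' * ‖f - d‖ := by
          gcongr
          exact (le_abs_self K).trans (by linarith)
      _ < K' * (ε / (3 * K')) := by gcongr
      _ = ε / 3 := by field_simp
  have h3 : ‖d - f‖ ≤ ε / 3 := by
    rw [norm_sub_rev]
    refine hdD.le.trans ?_
    apply div_le_div_of_nonneg_left hε.le (by norm_num)
    have : 0 ≤ |K| := abs_nonneg K
    rw [hK']; linarith
  calc _ ≤ ‖∑ j ∈ F, gs j (f - d) • g j‖ + ‖∑ j ∈ F, gs j d • g j - d‖ + ‖d - f‖ := norm_add₃_le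
    _ < ε := by linarith

lemma block_sum {E : Type*} [NormedAddCommGroup E] [NormedSpace ℂ E] (N : ℕ) (c : ℂ)
    (h : E) (q : ℕ → E) (χ : ℕ → Bool → ℝ) :
    ∑ k ∈ Finset.range N, ∑ b : Bool, (χ k b : ℂ) • ((c / (2 * (N : ℂ))) •
      (h + (if b then (1 : ℂ) else -1) • q k)) =
    (((1 / (N : ℝ)) * ∑ k ∈ Finset.range N, (χ k true + χ k false) / 2 : ℝ) : ℂ) • (c • h) +
      c • ∑ k ∈ Finset.range N, (((1 / (N : ℝ)) * ((χ k true - χ k false) / 2) : ℝ) : ℂ) • q k := by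
  rw [Finset.mul_sum, Complex.ofReal_sum, Finset.sum_smul, Finset.smul_sum,
    ← Finset.sum_add_distrib]
  apply Finset.sum_congr rfl
  intro k _
  simp only [Fintype.sum_bool, if_true, Bool.false_eq_true, if_false]
  push_cast
  rw [div_eq_mul_inv, mul_inv]
  module


lemma sum_half_pow {ι : Type*} [Encodable ι] (F : Finset ι) :
    ∑ i ∈ F, (1 / 2 : ℝ) ^ (Encodable.encode i) ≤ 2 := by
  classical
  rw [← Finset.sum_image (s := F) (g := Encodable.encode) (f := fun n => (1 / 2 : ℝ) ^ n)
    (fun x _ y _ h => Encodable.encode_injective h)]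
  calc _ ≤ ∑' n : ℕ, (1 / 2 : ℝ) ^ n :=
        summable_geometric_two.sum_le_tsum _ (fun n _ => by positivity)
    _ = 2 := tsum_geometric_two

theorem frame_general {X : Type*} [MeasurableSpace X] [StandardBorelSpace X]
    (μ : Measure X) [IsFiniteMeasure μ] [NullSingletonClass μ] (p : ℝ) (hp : 1 < p)
    [h1 : Fact (1 ≤ ENNReal.ofReal p)] :
    ∃ (g : ℕ → Lp ℂ (ENNReal.ofReal p) μ) (gs : ℕ → Lp ℂ (ENNReal.ofReal p) μ →L[ℂ] ℂ),
      (∀ n, ∀ᵐ x ∂μ, ‖g n x‖ = 1) ∧ ∀ f, HasSum (fun n => gs n f • g n) f := by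
  classical
  obtain ⟨h, hL, c, C, hC0, hmeas, hle, hLae, hH, hD⟩ := haar_package μ p hp
  set δ : Option (List Bool) → ℝ := fun i => (1 / 2 : ℝ) ^ (Encodable.encode i) / (‖c i‖ + 1) with hδ
  have hδ0 : ∀ i, 0 < δ i := fun i => by positivity
  have hδc : ∀ i, ‖c i‖ * δ i ≤ (1 / 2 : ℝ) ^ (Encodable.encode i) := by
    intro i
    simp only [hδ]
    rw [mul_div_assoc', div_le_iff₀ (by positivity)]
    have : 0 < (1 / 2 : ℝ) ^ (Encodable.encode i) := by positivity
    nlinarith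
  choose N r hN hrm hr1 hR using fun i => rad_lp μ p hp (δ i) (hδ0 i)
  set Q : Option (List Bool) → ℕ → X → ℂ := fun i k x =>
    Complex.I * ((√(1 - h i x ^ 2) * r i k x : ℝ) : ℂ) with hQ
  have hQm : ∀ i k, Measurable (Q i k) := by
    intro i k
    have := hmeas i
    have := hrm i k
    simp only [hQ]
    fun_prop
  have hh2 : ∀ i x, h i x ^ 2 ≤ 1 := fun i x => by
    rw [← sq_abs]; exact pow_le_one₀ (abs_nonneg _) (hle i x)
  have hs1 : ∀ i x, √(1 - h i x ^ 2) ≤ 1 := fun i x => by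
    rw [Real.sqrt_le_left zero_le_one]; linarith [sq_nonneg (h i x)]
  have hrabs : ∀ i k x, |r i k x| = 1 := fun i k x => by
    rcases hr1 i k x with h | h <;> simp [h]
  have hQb : ∀ i k x, ‖Q i k x‖ ≤ 1 := by
    intro i k x
    simp only [hQ]
    rw [norm_mul, Complex.norm_I, one_mul, Complex.norm_real, Real.norm_eq_abs, abs_mul, hrabs,
      mul_one, abs_of_nonneg (Real.sqrt_nonneg _)]
    exact hs1 i x
  have hQmem := fun i k => memLp_of_le μ (ENNReal.ofReal p) (Q i k) (hQm i k) (hQb i k)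
  set q : Option (List Bool) → ℕ → Lp ℂ (ENNReal.ofReal p) μ := fun i k => (hQmem i k).toLp with hq
  have hqae : ∀ i k, q i k =ᵐ[μ] Q i k := fun i k => (hQmem i k).coeFn_toLp
  set sg : Bool → ℂ := fun b => if b then (1 : ℂ) else -1 with hsg
  set g : Option (List Bool) × ℕ × Bool → Lp ℂ (ENNReal.ofReal p) μ := fun j => hL j.1 + sg j.2.2 • q j.1 j.2.1
    with hg
  set gs : Option (List Bool) × ℕ × Bool → Lp ℂ (ENNReal.ofReal p) μ →L[ℂ] ℂ := fun j =>
    if j.2.1 < N j.1 then (1 / (2 * (N j.1 : ℂ))) • c j.1 else 0 with hgs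
  have huni : ∀ j, ∀ᵐ x ∂μ, ‖g j x‖ = 1 := by
    rintro ⟨i, k, b⟩
    filter_upwards [Lp.coeFn_add (hL i) (sg b • q i k), hLae i, hqae i k,
      Lp.coeFn_smul (sg b) (q i k)] with x e1 e2 e3 e4
    simp only [hg]
    rw [e1, Pi.add_apply, e2, e4, Pi.smul_apply, e3]
    have hb : ∃ t : ℝ, sg b = (t : ℂ) ∧ t ^ 2 = 1 := by
      cases b
      · exact ⟨-1, by simp [hsg], by norm_num⟩
      · exact ⟨1, by simp [hsg], by norm_num⟩
    obtain ⟨t, ht, ht2⟩ := hb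
    have e5 : (h i x : ℂ) + sg b • Q i k x =
        (h i x : ℂ) + ((t * (√(1 - h i x ^ 2) * r i k x) : ℝ) : ℂ) * Complex.I := by
      simp only [hQ, smul_eq_mul, ht]
      push_cast
      ring
    rw [e5, Complex.norm_add_mul_I]
    have hr2 : r i k x ^ 2 = 1 := by rcases hr1 i k x with h | h <;> simp [h]
    rw [mul_pow, mul_pow, ht2, hr2, Real.sq_sqrt (by linarith [hh2 i x])]
    simp
  -- block sums
  have hblock : ∀ (f : Lp ℂ (ENNReal.ofReal p) μ) (i : Option (List Bool)) (M : ℕ) (χ : ℕ → Bool → ℝ),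
      N i ≤ M → ∑ k ∈ Finset.range M, ∑ b : Bool, (χ k b : ℂ) • (gs (i, k, b) f • g (i, k, b)) =
      (((1 / (N i : ℝ)) * ∑ k ∈ Finset.range (N i), (χ k true + χ k false) / 2 : ℝ) : ℂ) •
        (c i f • hL i) + c i f • ∑ k ∈ Finset.range (N i),
          (((1 / (N i : ℝ)) * ((χ k true - χ k false) / 2) : ℝ) : ℂ) • q i k := by
    intro f i M χ hM
    rw [← block_sum]
    symm
    rw [← Finset.sum_subset (Finset.range_mono hM)]
    · apply Finset.sum_congr rfl
      intro k hk
      apply Finset.sum_congr rfl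
      intro b _
      have hk' := Finset.mem_range.1 hk
      simp only [hgs, hg, hk', if_true]
      congr 2
      simp only [_root_.smul_apply, smul_eq_mul]
      ring
    · intro k _ hk
      have hk' : ¬ k < N i := by simpa using hk
      apply Finset.sum_eq_zero
      intro b _
      simp [hgs, hk']
  have hRn : ∀ (i : Option (List Bool)) (χ : ℕ → Bool → ℝ), (∀ k b, 0 ≤ χ k b ∧ χ k b ≤ 1) →
      ‖∑ k ∈ Finset.range (N i),
          (((1 / (N i : ℝ)) * ((χ k true - χ k false) / 2) : ℝ) : ℂ) • q i k‖ ≤ δ i := by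
    intro i χ hχ
    apply hR i (fun k => (χ k true - χ k false) / 2)
    · intro k
      have a1 := hχ k true
      have a2 := hχ k false
      rw [abs_le]
      constructor <;> linarith
    · filter_upwards [lp_sum_ae (Finset.range (N i)) (q i) (Q i) (hqae i)
        (fun k => (((1 / (N i : ℝ)) * ((χ k true - χ k false) / 2) : ℝ) : ℂ))] with x hx
      rw [hx]
      have e : ∑ k ∈ Finset.range (N i),
          (((1 / (N i : ℝ)) * ((χ k true - χ k false) / 2) : ℝ) : ℂ) * Q i k x =
          Complex.I * ((√(1 - h i x ^ 2) * ((1 / (N i : ℝ)) * ∑ k ∈ Finset.range (N i),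
            (χ k true - χ k false) / 2 * r i k x) : ℝ) : ℂ) := by
        rw [Finset.mul_sum, Finset.mul_sum, Complex.ofReal_sum, Finset.mul_sum]
        apply Finset.sum_congr rfl
        intro k _
        simp only [hQ]
        push_cast
        ring
      rw [e, norm_mul, Complex.norm_I, one_mul, Complex.norm_real, Real.norm_eq_abs, abs_mul,
        abs_of_nonneg (Real.sqrt_nonneg _)]
      exact mul_le_of_le_one_left (abs_nonneg _) (hs1 i x)
  have hbound : ∀ (F : Finset (Option (List Bool) × ℕ × Bool)) (f : Lp ℂ (ENNReal.ofReal p) μ),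
      ‖∑ j ∈ F, gs j f • g j‖ ≤ (C + 2) * ‖f‖ := by
    intro F f
    set I0 := F.image Prod.fst with hI0
    set M := (F.image (fun j => j.2.1)).sup id + 1 + I0.sup N with hM
    set χ : Option (List Bool) → ℕ → Bool → ℝ := fun i k b => if (i, k, b) ∈ F then 1 else 0 with hχ
    have hχ1 : ∀ i k b, 0 ≤ χ i k b ∧ χ i k b ≤ 1 := by
      intro i k b
      simp only [hχ]
      split_ifs <;> norm_num
    have hsub : F ⊆ I0 ×ˢ (Finset.range M ×ˢ (Finset.univ : Finset Bool)) := by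
      rintro ⟨i, k, b⟩ hj
      simp only [Finset.mem_product, Finset.mem_range, Finset.mem_univ, and_true]
      refine ⟨Finset.mem_image_of_mem Prod.fst hj, ?_⟩
      have : k ≤ (F.image (fun j => j.2.1)).sup id :=
        Finset.le_sup (f := id) (Finset.mem_image_of_mem (fun j : Option (List Bool) × ℕ × Bool => j.2.1) hj)
      omega
    have e1 : ∑ j ∈ F, gs j f • g j = ∑ i ∈ I0, ∑ k ∈ Finset.range M, ∑ b : Bool,
        (χ i k b : ℂ) • (gs (i, k, b) f • g (i, k, b)) := by
      have e0 : ∑ j ∈ F, gs j f • g j =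
          ∑ j ∈ F, (χ j.1 j.2.1 j.2.2 : ℂ) • (gs j f • g j) := by
        apply Finset.sum_congr rfl
        rintro ⟨i, k, b⟩ hj
        simp [hχ, hj]
      rw [e0, Finset.sum_subset hsub, Finset.sum_product]
      · apply Finset.sum_congr rfl
        intro i _
        rw [Finset.sum_product]
      · rintro ⟨i, k, b⟩ _ hj
        simp [hχ, hj]
    have e2 : ∀ i ∈ I0, ∑ k ∈ Finset.range M, ∑ b : Bool,
        (χ i k b : ℂ) • (gs (i, k, b) f • g (i, k, b)) = _ := fun i hi =>
      hblock f i M (χ i) ((Finset.le_sup (f := N) hi).trans (by omega))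
    rw [e1, Finset.sum_congr rfl e2, Finset.sum_add_distrib, add_mul]
    refine (norm_add_le _ _).trans (add_le_add ?_ ?_)
    · apply hH I0 (fun i => (1 / (N i : ℝ)) * ∑ k ∈ Finset.range (N i),
        (χ i k true + χ i k false) / 2)
      intro i
      have hNi : 0 < (N i : ℝ) := by exact_mod_cast hN i
      have s0 : 0 ≤ ∑ k ∈ Finset.range (N i), (χ i k true + χ i k false) / 2 :=
        Finset.sum_nonneg fun k _ => by linarith [(hχ1 i k true).1, (hχ1 i k false).1]
      have s1 : ∑ k ∈ Finset.range (N i), (χ i k true + χ i k false) / 2 ≤ N i := by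
        calc _ ≤ ∑ k ∈ Finset.range (N i), (1 : ℝ) :=
              Finset.sum_le_sum fun k _ => by linarith [(hχ1 i k true).2, (hχ1 i k false).2]
          _ = N i := by simp
      rw [abs_of_nonneg (by positivity), one_div, inv_mul_le_iff₀ hNi, mul_one]
      exact s1
    · calc _ ≤ ∑ i ∈ I0, ‖c i f • ∑ k ∈ Finset.range (N i),
            (((1 / (N i : ℝ)) * ((χ i k true - χ i k false) / 2) : ℝ) : ℂ) • q i k‖ :=
            norm_sum_le _ _
        _ ≤ ∑ i ∈ I0, (1 / 2 : ℝ) ^ (Encodable.encode i) * ‖f‖ := by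
            apply Finset.sum_le_sum
            intro i _
            rw [norm_smul]
            calc _ ≤ (‖c i‖ * ‖f‖) * δ i :=
                  mul_le_mul ((c i).le_opNorm f) (hRn i (χ i) (hχ1 i)) (norm_nonneg _)
                    (by positivity)
              _ = (‖c i‖ * δ i) * ‖f‖ := by ring
              _ ≤ _ := by gcongr; exact hδc i
        _ = (∑ i ∈ I0, (1 / 2 : ℝ) ^ (Encodable.encode i)) * ‖f‖ := by rw [Finset.sum_mul]
        _ ≤ 2 * ‖f‖ := by gcongr; exact sum_half_pow I0
  have hsum : ∀ f, HasSum (fun j => gs j f • g j) f := by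
    apply hasSum_of_dense_bound g gs (C + 2) hbound _ hD
    rintro f ⟨F, hF0, hFs⟩
    have e : ∑ j ∈ F ×ˢ (Finset.range (F.sup N) ×ˢ (Finset.univ : Finset Bool)),
        gs j f • g j = f := by
      rw [Finset.sum_product]
      conv_rhs => rw [← hFs]
      apply Finset.sum_congr rfl
      intro i hi
      rw [Finset.sum_product]
      have := hblock f i (F.sup N) (fun _ _ => 1) (Finset.le_sup (f := N) hi)
      simp only [Complex.ofReal_one, one_smul] at this
      rw [this]
      have hNi : (N i : ℂ) ≠ 0 := by exact_mod_cast (hN i).ne'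
      simp [hNi]
    conv => arg 2; rw [← e]
    apply hasSum_sum_of_ne_finset_zero
    rintro ⟨i, k, b⟩ hj
    by_cases hi : i ∈ F
    · have hk : ¬ k < N i := by
        intro hk
        apply hj
        simp only [Finset.mem_product, hi, Finset.mem_range, Finset.mem_univ, and_true, true_and]
        exact hk.trans_le (Finset.le_sup (f := N) hi)
      simp [hgs, hk]
    · have : c i f = 0 := hF0 i hi
      simp only [hgs]
      split_ifs <;> simp [this]
  have : Infinite (Option (List Bool) × ℕ × Bool) := inferInstance
  obtain ⟨e⟩ := nonempty_denumerable (Option (List Bool) × ℕ × Bool)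
  have eq : ℕ ≃ Option (List Bool) × ℕ × Bool := (Denumerable.eqv (Option (List Bool) × ℕ × Bool)).symm
  refine ⟨g ∘ eq, gs ∘ eq, fun n => huni _, fun f => ?_⟩
  exact (Equiv.hasSum_iff eq (f := fun j => gs j f • g j)).2 (hsum f)


lemma frame_zero {X : Type*} [MeasurableSpace X] [Subsingleton X]
    (μ : Measure X) [IsFiniteMeasure μ] (hμ : μ Set.univ ≠ 0) (p : ℝ)
    [h1 : Fact (1 ≤ ENNReal.ofReal p)] :
    ∃ (g : ℕ → Lp ℂ (ENNReal.ofReal p) μ) (gs : ℕ → Lp ℂ (ENNReal.ofReal p) μ →L[ℂ] ℂ),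
      (∀ n, ∀ᵐ x ∂μ, ‖g n x‖ = 1) ∧ ∀ f, HasSum (fun n => gs n f • g n) f := by
  have hmem := memLp_of_le μ (ENNReal.ofReal p) (fun _ => (1 : ℂ)) measurable_const (by simp)
  have hae := hmem.coeFn_toLp
  refine ⟨fun _ => hmem.toLp, fun n => if n = 0 then
    ((μ.real Set.univ : ℂ)⁻¹) • intCLM μ p Set.univ else 0, fun n => ?_, fun f => ?_⟩
  · filter_upwards [hae] with x hx
    rw [hx]; simp
  · have e : ((μ.real Set.univ : ℂ)⁻¹ • intCLM μ p Set.univ) f • hmem.toLp = f := by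
      apply Lp.ext
      filter_upwards [Lp.coeFn_smul (((μ.real Set.univ : ℂ)⁻¹ • intCLM μ p Set.univ) f) hmem.toLp,
        hae] with x h2 h3
      rw [h2, Pi.smul_apply, h3]
      simp only [_root_.smul_apply, smul_eq_mul, mul_one, intCLM_apply]
      have : (fun y => f y) = fun _ => f x := by
        funext y; rw [Subsingleton.elim y x]
      rw [this, Measure.restrict_univ, integral_const, Complex.real_smul, ← mul_assoc,
        inv_mul_cancel₀, one_mul]
      have : μ.real Set.univ ≠ 0 := by
        rw [Ne, measureReal_eq_zero_iff]; exact hμ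
      exact_mod_cast this
    have h := hasSum_single (f := fun n : ℕ => ((if n = 0 then
      ((μ.real Set.univ : ℂ)⁻¹) • intCLM μ p Set.univ else 0 :
        Lp ℂ (ENNReal.ofReal p) μ →L[ℂ] ℂ) f) • hmem.toLp) 0 (by
        intro n hn
        simp [hn])
    rw [if_pos rfl, e] at h
    exact h

theorem stmt7 (d : ℕ) (Ω : Set (EuclideanSpace ℝ (Fin d))) (hΩmeas : MeasurableSet Ω)
    (hΩpos : 0 < volume Ω) (hΩfin : volume Ω < ⊤)
    (p : ℝ) (hp : 1 < p) [Fact (1 ≤ ENNReal.ofReal p)] :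
    ∃ (g : ℕ → Lp ℂ (ENNReal.ofReal p) (volume.restrict Ω))
      (gs : ℕ → Lp ℂ (ENNReal.ofReal p) (volume.restrict Ω) →L[ℂ] ℂ),
      (∀ n, ∀ᵐ x ∂(volume.restrict Ω), ‖g n x‖ = 1) ∧
      ∀ f, HasSum (fun n => gs n f • g n) f := by
  have hfin : IsFiniteMeasure (volume.restrict Ω) := ⟨by simpa using hΩfin⟩
  rcases Nat.eq_zero_or_pos d with h0 | h0
  · subst h0
    exact frame_zero (volume.restrict Ω) (by simpa using hΩpos.ne') p
  · have : Nonempty (Fin d) := ⟨⟨0, h0⟩⟩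
    exact frame_general (volume.restrict Ω) p hp
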